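/- arXiv:2006.15287 — 5 statements merged into one kernel-verified Lean document; each statement's English description precedes it below -/
import Mathlib

section
/- Let L, s and k be positive integers with L ≥ 3 and s+1 ≤ k ≤ L+s. Then for every integer N ≥ Γ(s), the number of partitions of N lying in I_{L,s,k} is strictly greater than the number of partitions of N lying in D_{L,s}. -/
/-- `D_{L,s}`: nonempty partitions with all parts in `{s+1, ..., L+s}`. -/
def InD (L s : ℕ) {N : ℕ} (p : N.Partition) : Prop :=
  p.parts ≠ 0 ∧ ∀ x ∈ p.parts, s + 1 ≤ x ∧ x ≤ L + s

/-- `I_{L,s,k}`: partitions with smallest part `s`, all parts `≤ L+s`, and no part equal to `k`. -/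
def InI (L s k : ℕ) {N : ℕ} (p : N.Partition) : Prop :=
  s ∈ p.parts ∧ (∀ x ∈ p.parts, s ≤ x ∧ x ≤ L + s) ∧ k ∉ p.parts

/-- `P_{L,s} = (s+1)(s+2)⋯(s+L)`. -/
def prodP (L s : ℕ) : ℕ := ∏ i ∈ Finset.range L, (s + 1 + i)

/-- `γ(L,s)`. -/
def gammaLS (L s : ℕ) : ℕ :=
  (∑ i ∈ Finset.range L, (s + 1 + i)) *
    (prodP L s ^ ((prodP L s ^ 2 - 1) * L + 2) + ((prodP L s ^ 2 - 1) * L - 2) * prodP L s)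

/-- `Γ(s) = γ(3s+2, s)`. -/
def GammaS (s : ℕ) : ℕ := gammaLS (3 * s + 2) s

namespace PartAux

/-- Routing function: insert six spare residues after each block of length `M`. -/
def phi (M j : ℕ) : ℕ := j + 6 * (j / M)

lemma phi_div (M j : ℕ) (hM : 0 < M) : phi M j / (M + 6) = j / M ∧ phi M j % (M + 6) = j % M := by
  have h := Nat.div_add_mod j M
  have h2 := Nat.mod_lt j hM
  have e : phi M j = j % M + (M + 6) * (j / M) := by
    unfold phi; nlinarith
  constructor
  · rw [e, Nat.add_mul_div_left _ _ (by omega), Nat.div_eq_of_lt (by omega)]; omega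
  · rw [e, Nat.add_mul_mod_self_left, Nat.mod_eq_of_lt (by omega)]

lemma phi_inj (M i j : ℕ) (hM : 0 < M) (h : phi M i = phi M j) : i = j := by
  have h1 := phi_div M i hM
  have h2 := phi_div M j hM
  rw [h] at h1
  have e1 := Nat.div_add_mod i M
  have e2 := Nat.div_add_mod j M
  rw [← e1, ← e2, ← h1.1, ← h1.2, ← h2.1, ← h2.2]

lemma two_rep (a d n x y : ℕ) (p : ℕ → Prop) (ha : p a) (hd : p d) (h : x * a + y * d = n) :
    ∃ R : Multiset ℕ, R.sum = n ∧ ∀ z ∈ R, p z := by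
  refine ⟨Multiset.replicate x a + Multiset.replicate y d, by simp [h], ?_⟩
  intro z hz
  rcases Multiset.mem_add.1 hz with hz | hz
  · rw [Multiset.eq_of_mem_replicate hz]; exact ha
  · rw [Multiset.eq_of_mem_replicate hz]; exact hd

lemma consec_rep (a n B : ℕ) (p : ℕ → Prop) (ha : p a) (hd : p (a + 1)) (h0 : 0 < a) (hB : a ≤ B)
    (h : B ^ 2 ≤ n) : ∃ R : Multiset ℕ, R.sum = n ∧ ∀ z ∈ R, p z := by
  have e := Nat.div_add_mod n a
  have hr := Nat.mod_lt n h0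
  have hq : a ≤ n / a := by
    rw [Nat.le_div_iff_mul_le h0]; nlinarith
  obtain ⟨u, hu⟩ := Nat.exists_eq_add_of_le (show n % a ≤ n / a by omega)
  refine two_rep a (a + 1) n u (n % a) p ha hd ?_
  rw [hu] at e
  nlinarith

lemma skip_rep (a n B : ℕ) (p : ℕ → Prop) (ha : p a) (hd : p (a + 2)) (h0 : 0 < a) (hB : a + 1 ≤ B)
    (h : B ^ 2 ≤ n) (hpar : Even a → Even n) : ∃ R : Multiset ℕ, R.sum = n ∧ ∀ z ∈ R, p z := by
  have e := Nat.div_add_mod n a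
  have hr := Nat.mod_lt n h0
  have hq : a + 1 ≤ n / a := by
    rw [Nat.le_div_iff_mul_le h0]; nlinarith
  generalize n / a = q at *
  generalize n % a = r at *
  rcases Nat.even_or_odd r with ⟨t, ht⟩ | hodd
  · obtain ⟨u, hu⟩ := Nat.exists_eq_add_of_le (show t ≤ q by omega)
    refine two_rep a (a + 2) n u t p ha hd ?_
    subst hu; subst ht; nlinarith
  · have hao : Odd a := by
      by_contra hc
      have hae : Even a := by simpa using hc
      have := hpar hae
      rw [← e] at this
      have h3 : Even (a * q) := hae.mul_right q
      have := (Nat.even_add.1 this).1 h3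
      exact (Nat.not_even_iff_odd.2 hodd) this
    obtain ⟨t, ht⟩ := hodd.add_odd hao
    obtain ⟨u, hu⟩ := Nat.exists_eq_add_of_le (show t + 1 ≤ q by omega)
    refine two_rep a (a + 2) n u t p ha hd ?_
    subst hu; nlinarith

lemma rep_exists (L s k n : ℕ) (hL : 3 ≤ L) (hk1 : s + 1 ≤ k) (hk2 : k ≤ L + s)
    (hn : (s + 4) ^ 2 ≤ n) (hpar : L = 3 → Odd s → Odd k → Even n) :
    ∃ R : Multiset ℕ, R.sum = n ∧ ∀ x ∈ R, s + 1 ≤ x ∧ x ≤ L + s ∧ x ≠ k ∧ x ≤ s + 4 := by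
  by_cases h1 : k = s + 1
  · by_cases h3 : L = 3
    · exact consec_rep (s + 2) n (s + 4) _ (by omega) (by omega) (by omega) (by omega) hn
    · exact consec_rep (s + 3) n (s + 4) _ (by omega) (by omega) (by omega) (by omega) hn
  · by_cases h2 : k = s + 2
    · by_cases h3 : L = 3
      · refine skip_rep (s + 1) n (s + 4) _ (by omega) (by omega) (by omega) (by omega) hn ?_
        intro he
        have ho : Odd s := by
          rcases he with ⟨t, ht⟩
          exact ⟨t - 1, by omega⟩
        apply hpar h3 ho
        rw [h2]
        rcases ho with ⟨t, ht⟩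
        exact ⟨t + 1, by omega⟩
      · exact consec_rep (s + 3) n (s + 4) _ (by omega) (by omega) (by omega) (by omega) hn
    · exact consec_rep (s + 1) n (s + 4) _ (by omega) (by omega) (by omega) (by omega) hn

/-- The routing relation between `(j, μ)` (a partition with `j` copies of `k`) and `(m, ν)`. -/
def Rel (s k F M J W Ff g : ℕ) (X : ℕ → ℕ) (rep : ℕ → Multiset ℕ)
    (j : ℕ) (μ : Multiset ℕ) (m : ℕ) (ν : Multiset ℕ) : Prop :=
  (m = phi M j ∧ phi M j * s + F ≤ j * k ∧ ν = μ + rep (j * k - phi M j * s)) ∨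
  (j < J ∧ ∃ b κ, m = (M + 6) * (b * J + j) + (M + j % 2) ∧ μ = κ + Multiset.replicate (X b) b ∧
    ν = κ + rep (j * k + b * X b - m * s)) ∨
  (j < J ∧ ∃ b q c κ, m = (M + 6) * q + (M + 4) ∧ μ = b ::ₘ κ ∧ Multiset.count g κ < W ∧
    g ∉ rep (Ff + c - W * (c * J + j) * g) ∧ b + j * k = m * s + (Ff + c) ∧
    ν = κ + Multiset.replicate (W * (c * J + j)) g + rep (Ff + c - W * (c * J + j) * g))

lemma pair_inj (J a b i j : ℕ) (hi : i < J) (hj : j < J) (h : a * J + i = b * J + j) :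
    a = b ∧ i = j := by
  have h1 : (a * J + i) / J = a := by
    rw [mul_comm, Nat.mul_add_div (by omega), Nat.div_eq_of_lt hi]; rfl
  have h2 : (b * J + j) / J = b := by
    rw [mul_comm, Nat.mul_add_div (by omega), Nat.div_eq_of_lt hj]; rfl
  have : a = b := by rw [← h1, ← h2, h]
  subst this
  exact ⟨rfl, by omega⟩

lemma res (Q q r : ℕ) (h : r < Q) : (Q * q + r) % Q = r ∧ (Q * q + r) / Q = q := by
  constructor
  · rw [Nat.mul_add_mod, Nat.mod_eq_of_lt h]
  · rw [Nat.mul_add_div (by omega), Nat.div_eq_of_lt h]; rfl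

lemma rel_inj {s k F M J W Ff g : ℕ} {X : ℕ → ℕ} {rep : ℕ → Multiset ℕ} (hM : 0 < M)
    {j j' m : ℕ} {μ μ' ν : Multiset ℕ}
    (h : Rel s k F M J W Ff g X rep j μ m ν) (h' : Rel s k F M J W Ff g X rep j' μ' m ν) :
    j = j' ∧ μ = μ' := by
  have pj := (phi_div M j hM).2
  have pj' := (phi_div M j' hM).2
  have lj := Nat.mod_lt j hM
  have lj' := Nat.mod_lt j' hM
  rcases h with ⟨hm, -, hν⟩ | ⟨hj, b, κ, hm, hμ, hν⟩ | ⟨hj, b, q, c, κ, hm, hμ, hc, hg, hb, hν⟩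
  · rw [← hm] at pj
    rcases h' with ⟨hm', -, hν'⟩ | ⟨hj', b', κ', hm', hμ', hν'⟩ |
      ⟨hj', b', q', c', κ', hm', hμ', hc', hg', hb', hν'⟩
    · have := phi_inj M j j' hM (by rw [← hm, ← hm'])
      subst this
      exact ⟨rfl, add_right_cancel (hν.symm.trans hν')⟩
    · have := (res (M + 6) (b' * J + j') (M + j' % 2) (by omega)).1
      rw [← hm'] at this; omega
    · have := (res (M + 6) q' (M + 4) (by omega)).1
      rw [← hm'] at this; omega
  · have r1 := res (M + 6) (b * J + j) (M + j % 2) (by omega)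
    rw [← hm] at r1
    rcases h' with ⟨hm', -, hν'⟩ | ⟨hj', b', κ', hm', hμ', hν'⟩ |
      ⟨hj', b', q', c', κ', hm', hμ', hc', hg', hb', hν'⟩
    · rw [← hm'] at pj'; omega
    · have r2 := res (M + 6) (b' * J + j') (M + j' % 2) (by omega)
      rw [← hm'] at r2
      obtain ⟨rfl, rfl⟩ := pair_inj J b b' j j' hj hj' (by rw [← r1.2, ← r2.2])
      have : κ = κ' := add_right_cancel (hν.symm.trans hν')
      exact ⟨rfl, by rw [hμ, hμ', this]⟩
    · have := (res (M + 6) q' (M + 4) (by omega)).1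
      rw [← hm'] at this; omega
  · have r1 := res (M + 6) q (M + 4) (by omega)
    rw [← hm] at r1
    rcases h' with ⟨hm', -, hν'⟩ | ⟨hj', b', κ', hm', hμ', hν'⟩ |
      ⟨hj', b', q', c', κ', hm', hμ', hc', hg', hb', hν'⟩
    · rw [← hm'] at pj'; omega
    · have r2 := res (M + 6) (b' * J + j') (M + j' % 2) (by omega)
      rw [← hm'] at r2; omega
    · have c1 : Multiset.count g ν = W * (c * J + j) + Multiset.count g κ := by
        rw [hν]; simp [Multiset.count_eq_zero_of_notMem hg]; omega
      have c2 : Multiset.count g ν = W * (c' * J + j') + Multiset.count g κ' := by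
        rw [hν']; simp [Multiset.count_eq_zero_of_notMem hg']; omega
      have e1 := (res W (c * J + j) _ hc).2
      have e2 := (res W (c' * J + j') _ hc').2
      rw [← c1] at e1
      rw [← c2] at e2
      obtain ⟨rfl, rfl⟩ := pair_inj J c c' j j' hj hj' (by rw [← e1, ← e2])
      have : κ = κ' := add_right_cancel (add_right_cancel (hν.symm.trans hν'))
      have hbb : b = b' := by omega
      exact ⟨rfl, by rw [hμ, hμ', this, hbb]⟩

lemma rel_miss {s k F M J W Ff g : ℕ} {X : ℕ → ℕ} {rep : ℕ → Multiset ℕ} (hM : 0 < M)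
    {j e : ℕ} {μ ν : Multiset ℕ} (he : e < 2)
    (h : Rel s k F M J W Ff g X rep j μ (M + 2 + e) ν) : False := by
  have pj := (phi_div M j hM).2
  have lj := Nat.mod_lt j hM
  have r0 := Nat.mod_eq_of_lt (show M + 2 + e < M + 6 by omega)
  rcases h with ⟨hm, -, hν⟩ | ⟨hj, b, κ, hm, hμ, hν⟩ | ⟨hj, b, q, c, κ, hm, hμ, hc, hg, hb, hν⟩
  · rw [← hm] at pj; omega
  · have r1 := (res (M + 6) (b * J + j) (M + j % 2) (by omega)).1
    rw [← hm] at r1; omega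
  · have r1 := (res (M + 6) q (M + 4) (by omega)).1
    rw [← hm] at r1; omega

lemma sum_bound (Y C : ℕ) (μ : Multiset ℕ) (h : ∀ b ∈ μ, b < Y ∧ μ.count b ≤ C) :
    μ.sum ≤ Y * Y * C := by
  rw [Finset.sum_multiset_count]
  calc ∑ m ∈ μ.toFinset, μ.count m • m ≤ ∑ m ∈ μ.toFinset, C * Y := by
        apply Finset.sum_le_sum
        intro i hi
        have := h i (by simpa using hi)
        simp only [smul_eq_mul]
        exact Nat.mul_le_mul this.2 this.1.le
    _ ≤ ∑ m ∈ Finset.range Y, C * Y := by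
        apply Finset.sum_le_sum_of_subset
        intro i hi
        have := h i (by simpa using hi)
        simpa using this.1
    _ = Y * Y * C := by simp; ring

lemma rel_exists (L s k N F M J W Ff Y g Xm : ℕ) (X : ℕ → ℕ) (rep : ℕ → Multiset ℕ)
    (hs : 1 ≤ s) (hk1 : s + 1 ≤ k) (hM : M = 12 * s) (hJ : J = F * M) (hF : 1 ≤ F)
    (hXe : ∀ b, Even (X b))
    (hX : ∀ b j, j < J → ((M + 6) * (b * J + j) + (M + j % 2)) * s + F ≤ X b)
    (hrep : ∀ n, F ≤ n → (L = 3 → Odd s → Odd k → Even n) →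
      (rep n).sum = n ∧ ∀ x ∈ rep n, s + 1 ≤ x ∧ x ≤ L + s ∧ x ≠ k ∧ x ≤ s + 4)
    (hg : 6 ≤ L → s + 5 ≤ g ∧ g ≤ L + s ∧ g ≠ k) (hgY : g < Y)
    (hW : X g ≤ W) (hFf : ∀ c j, c < (M + 6) * s → j < J → W * (c * J + j) * g + F ≤ Ff + c)
    (hY : Ff + (M + 4) * s ≤ Y) (hY2 : s + 6 ≤ Y) (hXm : ∀ b, b < Y → X b ≤ Xm)
    (hN : 2 * J * s + F + Y * Y * Xm < N) (j : ℕ) (μ : Multiset ℕ)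
    (hμ : ∀ x ∈ μ, s + 1 ≤ x ∧ x ≤ L + s ∧ x ≠ k) (hsum : j * k + μ.sum = N) :
    ∃ m ν, Rel s k F M J W Ff g X rep j μ m ν ∧ 1 ≤ m ∧ m * s + ν.sum = N ∧
      ∀ x ∈ ν, s + 1 ≤ x ∧ x ≤ L + s ∧ x ≠ k := by
  have hM0 : 0 < M := by omega
  by_cases hA : phi M j * s + F ≤ j * k
  · -- generic case
    obtain ⟨h1, h2⟩ := hrep (j * k - phi M j * s) (by omega) (by
      intro _ hso hko
      have : Even (phi M j) ↔ Even j := by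
        unfold phi; rw [Nat.even_add]; simp [Nat.even_mul]
        tauto
      rw [Nat.even_sub (by omega), Nat.even_mul, Nat.even_mul, this]
      simp [Nat.not_even_iff_odd.2 hso, Nat.not_even_iff_odd.2 hko])
    refine ⟨phi M j, μ + rep (j * k - phi M j * s), Or.inl ⟨rfl, hA, rfl⟩, ?_, ?_, ?_⟩
    · rcases Nat.eq_zero_or_pos j with rfl | h
      · simp at hA; omega
      · unfold phi; omega
    · rw [Multiset.sum_add, h1]; omega
    · intro x hx
      rcases Multiset.mem_add.1 hx with hx | hx
      · exact hμ x hx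
      · have := h2 x hx; tauto
  · have hjM := Nat.div_mul_le_self j M
    have hjJ : j < J := by
      by_contra hc
      apply hA
      have hq : F ≤ j / M := by
        rw [Nat.le_div_iff_mul_le hM0]; omega
      have : j * (s + 1) ≤ j * k := Nat.mul_le_mul_left _ hk1
      unfold phi
      rw [hM] at hjM ⊢
      rw [hM] at hq
      generalize j / (12 * s) = q at *
      nlinarith
    have hjk : j * k < 2 * J * s + F := by
      have : phi M j ≤ 2 * J := by
        unfold phi
        have : 6 * (j / M) ≤ j := by
          calc 6 * (j / M) ≤ M * (j / M) := Nat.mul_le_mul_right _ (by omega)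
            _ ≤ j := Nat.mul_div_le j M
        omega
      have := Nat.mul_le_mul_right s this
      omega
    by_cases hB : ∃ b ∈ μ, b < Y ∧ X b ≤ μ.count b
    · obtain ⟨b, hb, hbY, hbX⟩ := hB
      obtain ⟨κ, hκ⟩ := Multiset.le_iff_exists_add.1 (Multiset.le_count_iff_replicate_le.1 hbX)
      have hκ' : μ = κ + Multiset.replicate (X b) b := by rw [hκ, add_comm]
      have hX' := hX b j hjJ
      have hbX2 : X b ≤ b * X b := Nat.le_mul_of_pos_left _ (by have := hμ b hb; omega)
      set m := (M + 6) * (b * J + j) + (M + j % 2) with hm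
      have hmpar : Even m ↔ Even j := by
        rw [hm, hM]
        have e1 : Even ((12 * s + 6) * (b * J + j)) := by
          apply Even.mul_right; exact ⟨6 * s + 3, by ring⟩
        rw [Nat.even_add, Nat.even_add]
        have e2 : Even (12 * s) := ⟨6 * s, by ring⟩
        simp only [e1, e2, true_iff]
        rw [Nat.even_iff, Nat.even_iff]; omega
      obtain ⟨h1, h2⟩ := hrep (j * k + b * X b - m * s) (by omega) (by
        intro _ hso hko
        have := hXe b
        rw [Nat.even_sub (by omega), Nat.even_add, Nat.even_mul, Nat.even_mul, Nat.even_mul, hmpar]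
        simp [Nat.not_even_iff_odd.2 hso, Nat.not_even_iff_odd.2 hko, this])
      refine ⟨m, κ + rep (j * k + b * X b - m * s), Or.inr (Or.inl ⟨hjJ, b, κ, rfl, hκ', rfl⟩),
        by omega, ?_, ?_⟩
      · have : μ.sum = κ.sum + b * X b := by rw [hκ']; simp [mul_comm]
        rw [Multiset.sum_add, h1]; omega
      · intro x hx
        rcases Multiset.mem_add.1 hx with hx | hx
        · exact hμ x (by rw [hκ']; simp [hx])
        · have := h2 x hx; tauto
    · push Not at hB
      have hbig : ∃ b ∈ μ, Y ≤ b := by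
        by_contra hc
        push Not at hc
        have := sum_bound Y Xm μ (fun b hb => ⟨hc b hb, (hB b hb (hc b hb)).le.trans (hXm b (hc b hb))⟩)
        omega
      obtain ⟨b, hb, hbY⟩ := hbig
      obtain ⟨κ, hκ⟩ := Multiset.exists_cons_of_mem hb
      have hL6 : 6 ≤ L := by have := hμ b hb; omega
      obtain ⟨g1, g2, g3⟩ := hg hL6
      have hQs : 0 < (M + 6) * s := by positivity
      set A := b + j * k - Ff - (M + 4) * s with hAdef
      set q := A / ((M + 6) * s) with hq
      set c := A % ((M + 6) * s) with hc
      have hcl : c < (M + 6) * s := Nat.mod_lt _ hQs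
      have hA2 : (M + 6) * s * q + c = A := Nat.div_add_mod _ _
      set m := (M + 6) * q + (M + 4) with hm
      have hbal : b + j * k = m * s + (Ff + c) := by
        have : m * s = (M + 6) * s * q + (M + 4) * s := by rw [hm]; ring
        omega
      have hF2 := hFf c j hcl hjJ
      obtain ⟨h1, h2⟩ := hrep (Ff + c - W * (c * J + j) * g) (by omega) (by omega)
      have hcount : Multiset.count g κ < W := by
        have h3 : μ.count g < W := by
          by_cases hgm : g ∈ μ
          · exact (hB g hgm hgY).trans_le hW
          · rw [Multiset.count_eq_zero_of_notMem hgm]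
            have := hX g j hjJ
            omega
        have : κ.count g ≤ μ.count g := Multiset.count_le_of_le _ (by rw [hκ]; exact Multiset.le_cons_self _ _)
        omega
      refine ⟨m, κ + Multiset.replicate (W * (c * J + j)) g + rep (Ff + c - W * (c * J + j) * g),
        Or.inr (Or.inr ⟨hjJ, b, q, c, κ, rfl, hκ, hcount, ?_, hbal, rfl⟩), by omega, ?_, ?_⟩
      · intro hgr
        have := h2 g hgr; omega
      · have : μ.sum = b + κ.sum := by rw [hκ]; simp
        rw [Multiset.sum_add, Multiset.sum_add, h1, Multiset.sum_replicate, smul_eq_mul]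
        omega
      · intro x hx
        rcases Multiset.mem_add.1 hx with hx | hx
        · rcases Multiset.mem_add.1 hx with hx | hx
          · exact hμ x (by rw [hκ]; simp [hx])
          · rw [Multiset.eq_of_mem_replicate hx]; omega
        · have := h2 x hx; tauto

lemma split (k : ℕ) (μ : Multiset ℕ) :
    Multiset.replicate (μ.count k) k + μ.filter (fun x => x ≠ k) = μ := by
  rw [← Multiset.filter_eq' μ k]
  exact Multiset.filter_add_not _ μ

lemma final (L s k N F M J W Ff Y g Xm : ℕ) (X : ℕ → ℕ) (rep : ℕ → Multiset ℕ)
    (hs : 1 ≤ s) (hk1 : s + 1 ≤ k) (hM : M = 12 * s) (hJ : J = F * M) (hF : 1 ≤ F)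
    (hXe : ∀ b, Even (X b))
    (hX : ∀ b j, j < J → ((M + 6) * (b * J + j) + (M + j % 2)) * s + F ≤ X b)
    (hrep : ∀ n, F ≤ n → (L = 3 → Odd s → Odd k → Even n) →
      (rep n).sum = n ∧ ∀ x ∈ rep n, s + 1 ≤ x ∧ x ≤ L + s ∧ x ≠ k ∧ x ≤ s + 4)
    (hg : 6 ≤ L → s + 5 ≤ g ∧ g ≤ L + s ∧ g ≠ k) (hgY : g < Y)
    (hW : X g ≤ W) (hFf : ∀ c j, c < (M + 6) * s → j < J → W * (c * J + j) * g + F ≤ Ff + c)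
    (hY : Ff + (M + 4) * s ≤ Y) (hY2 : s + 6 ≤ Y) (hXm : ∀ b, b < Y → X b ≤ Xm)
    (hN : 2 * J * s + F + Y * Y * Xm < N) (hN2 : (M + 3) * s + F ≤ N) :
    Nat.card {p : N.Partition // InI L s k p} > Nat.card {p : N.Partition // InD L s p} := by
  have hM0 : 0 < M := by omega
  have key : ∀ p : {p : N.Partition // InD L s p}, ∃ m ν,
      Rel s k F M J W Ff g X rep (p.1.parts.count k) (p.1.parts.filter (fun x => x ≠ k)) m ν ∧
      1 ≤ m ∧ m * s + ν.sum = N ∧ ∀ x ∈ ν, s + 1 ≤ x ∧ x ≤ L + s ∧ x ≠ k := by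
    intro p
    apply rel_exists L s k N F M J W Ff Y g Xm X rep hs hk1 hM hJ hF hXe hX hrep hg hgY hW hFf
      hY hY2 hXm hN
    · intro x hx
      rw [Multiset.mem_filter] at hx
      have := p.2.2 x hx.1
      exact ⟨this.1, this.2, hx.2⟩
    · have h1 := congrArg Multiset.sum (split k p.1.parts)
      rw [Multiset.sum_add, Multiset.sum_replicate, smul_eq_mul, p.1.parts_sum] at h1
      exact h1
  choose m ν hR hm hsum hν using key
  have mk : ∀ (m : ℕ) (ν : Multiset ℕ), 1 ≤ m → m * s + ν.sum = N →
      (∀ x ∈ ν, s + 1 ≤ x ∧ x ≤ L + s ∧ x ≠ k) →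
      ∃ p : {p : N.Partition // InI L s k p}, p.1.parts = Multiset.replicate m s + ν := by
    intro m ν hm hsum hν
    have hpos : ∀ {i}, i ∈ Multiset.replicate m s + ν → s ≤ i ∧ i ≤ L + s ∧ i ≠ k := by
      intro i hi
      rcases Multiset.mem_add.1 hi with hx | hx
      · rw [Multiset.eq_of_mem_replicate hx]; omega
      · have := hν i hx; omega
    refine ⟨⟨⟨Multiset.replicate m s + ν, fun {i} hi => by have := hpos hi; omega, by simpa using hsum⟩,
      ?_, ?_, ?_⟩, rfl⟩
    · exact Multiset.mem_add.2 (Or.inl (Multiset.mem_replicate.2 ⟨by omega, rfl⟩))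
    · intro x hx
      have := hpos hx
      exact ⟨this.1, this.2.1⟩
    · intro hx
      exact (hpos hx).2.2 rfl
  have dec : ∀ (m m' : ℕ) (ν ν' : Multiset ℕ), (∀ x ∈ ν, s + 1 ≤ x ∧ x ≤ L + s ∧ x ≠ k) →
      (∀ x ∈ ν', s + 1 ≤ x ∧ x ≤ L + s ∧ x ≠ k) →
      Multiset.replicate m s + ν = Multiset.replicate m' s + ν' → m = m' ∧ ν = ν' := by
    intro m m' ν ν' h h' he
    have h1 : s ∉ ν := fun hx => by have := h s hx; omega
    have h2 : s ∉ ν' := fun hx => by have := h' s hx; omega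
    have h3 := congrArg (Multiset.count s) he
    simp [Multiset.count_eq_zero_of_notMem h1, Multiset.count_eq_zero_of_notMem h2] at h3
    subst h3
    exact ⟨rfl, add_left_cancel he⟩
  choose f hf using fun p => mk (m p) (ν p) (hm p) (hsum p) (hν p)
  have hinj : Function.Injective f := by
    intro p p' h
    have h1 := (hf p).symm.trans ((congrArg (fun z => z.1.parts) h).trans (hf p'))
    obtain ⟨e1, e2⟩ := dec _ _ _ _ (hν p) (hν p') h1
    have hR' := hR p'
    rw [← e1, ← e2] at hR'
    obtain ⟨c1, c2⟩ := rel_inj hM0 (hR p) hR'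
    apply Subtype.ext
    apply Nat.Partition.ext
    rw [← split k p.1.parts, ← split k p'.1.parts, c1, c2]
  have hle : (M + 2 + N % 2) * s ≤ (M + 3) * s := Nat.mul_le_mul_right _ (by omega)
  obtain ⟨h1, h2⟩ := hrep (N - (M + 2 + N % 2) * s) (by omega) (by
    intro _ hso _
    have e2 : Even (M + 2) := ⟨6 * s + 1, by omega⟩
    rw [Nat.even_sub (by omega), Nat.even_mul, Nat.even_add]
    simp only [e2, true_iff, Nat.not_even_iff_odd.2 hso, or_false]
    rw [Nat.even_iff, Nat.even_iff]; omega)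
  have h2' : ∀ x ∈ rep (N - (M + 2 + N % 2) * s), s + 1 ≤ x ∧ x ≤ L + s ∧ x ≠ k := by
    intro x hx; have := h2 x hx; tauto
  obtain ⟨p0, hp0⟩ := mk (M + 2 + N % 2) (rep (N - (M + 2 + N % 2) * s)) (by omega)
    (by rw [h1]; omega) h2'
  have hmiss : ∀ p, f p ≠ p0 := by
    intro p h
    have h3 := (hf p).symm.trans ((congrArg (fun z => z.1.parts) h).trans hp0)
    obtain ⟨e1, e2⟩ := dec _ _ _ _ (hν p) h2' h3
    have hR' := hR p
    rw [e1] at hR'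
    exact rel_miss hM0 (Nat.mod_lt _ (by omega)) hR'
  classical
  have := Fintype.ofFinite {p : N.Partition // InI L s k p}
  have := Fintype.ofFinite {p : N.Partition // InD L s p}
  rw [Nat.card_eq_fintype_card, Nat.card_eq_fintype_card]
  exact Fintype.card_lt_of_injective_of_notMem f hinj (b := p0) (by rintro ⟨p, hp⟩; exact hmiss p hp)

lemma gamma_lower (s : ℕ) (hs : 1 ≤ s) : (s + 6) ^ 100 ≤ GammaS s := by
  unfold GammaS gammaLS
  have hP : s + 6 ≤ prodP (3 * s + 2) s ∧ 12 ≤ prodP (3 * s + 2) s := by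
    unfold prodP
    rw [Finset.prod_range_succ, Finset.prod_range_succ']
    have h1 : 1 ≤ ∏ i ∈ Finset.range (3 * s), (s + 1 + (i + 1)) :=
      Finset.one_le_prod' (fun i _ => by omega)
    have h2 : 2 ≤ (∏ i ∈ Finset.range (3 * s), (s + 1 + (i + 1))) * (s + 1 + 0) := by nlinarith
    have h3 := Nat.mul_le_mul_right (s + 1 + (3 * s + 1)) h2
    constructor <;> omega
  generalize prodP (3 * s + 2) s = P at *
  have hS : 1 ≤ ∑ i ∈ Finset.range (3 * s + 2), (s + 1 + i) := by
    rw [Finset.sum_range_succ]; omega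
  have hP2 : 100 ≤ P ^ 2 - 1 := by
    have : 12 ^ 2 ≤ P ^ 2 := Nat.pow_le_pow_left hP.2 2
    omega
  have he : 100 ≤ (P ^ 2 - 1) * (3 * s + 2) + 2 := by nlinarith
  calc (s + 6) ^ 100 ≤ P ^ 100 := Nat.pow_le_pow_left hP.1 100
    _ ≤ P ^ ((P ^ 2 - 1) * (3 * s + 2) + 2) := Nat.pow_le_pow_right (by omega) he
    _ ≤ P ^ ((P ^ 2 - 1) * (3 * s + 2) + 2) + ((P ^ 2 - 1) * (3 * s + 2) - 2) * P := by omega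
    _ ≤ _ := Nat.le_mul_of_pos_left _ (by omega)

lemma pmul {w a b i j : ℕ} (ha : a ≤ w ^ i) (hb : b ≤ w ^ j) : a * b ≤ w ^ (i + j) := by
  rw [pow_add]; exact Nat.mul_le_mul ha hb

lemma padd {w a b i j : ℕ} (hw : 7 ≤ w) (ha : a ≤ w ^ i) (hb : b ≤ w ^ j) :
    a + b ≤ w ^ (max i j + 1) := by
  have h1 : w ^ i ≤ w ^ (max i j) := Nat.pow_le_pow_right (by omega) (le_max_left _ _)
  have h2 : w ^ j ≤ w ^ (max i j) := Nat.pow_le_pow_right (by omega) (le_max_right _ _)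
  rw [pow_succ]
  nlinarith

/-- Threshold multiplicity. -/
def XX (s F M J b : ℕ) : ℕ := 2 * (((M + 6) * (b * J + J) + (M + 1)) * s + F)

lemma XX_mono (s F M J b b' : ℕ) (h : b ≤ b') : XX s F M J b ≤ XX s F M J b' := by
  unfold XX; gcongr

lemma XX_bound (s F M J b w i : ℕ) (hw : 7 ≤ w) (hs : s ≤ w ^ 1) (hF : F ≤ w ^ 2)
    (hM : M + 6 ≤ w ^ 3) (hJ : J ≤ w ^ 5) (hb : b ≤ w ^ i) :
    XX s F M J b ≤ w ^ (max (max (3 + (max (i + 5) 5 + 1)) 3 + 1 + 1) 2 + 1 + 1) := by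
  unfold XX
  have h2 : 2 ≤ w ^ 1 := by rw [pow_one]; omega
  have h := pmul h2 (padd hw (pmul (padd hw (pmul hM (padd hw (pmul hb hJ) hJ))
    (show M + 1 ≤ w ^ 3 by omega)) hs) hF)
  refine h.trans (le_of_eq ?_)
  congr 1
  omega

lemma main_bound (s F M J W Ff Y : ℕ) (hs : 1 ≤ s) (hF : F = (s + 4) ^ 2) (hM : M = 12 * s)
    (hJ : J = F * M) (hW : W = XX s F M J (s + 6))
    (hFf : Ff = W * ((M + 6) * s * J) * (s + 6) + F) (hY : Y = Ff + (M + 4) * s + (s + 7)) :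
    2 * J * s + F + Y * Y * XX s F M J Y + 1 ≤ (s + 6) ^ 100 := by
  have hw : 7 ≤ s + 6 := by omega
  have hw1 : s + 6 ≤ (s + 6) ^ 1 := by simp
  have hw2 : s + 7 ≤ (s + 6) ^ 2 := by nlinarith
  have hs1 : s ≤ (s + 6) ^ 1 := by simp
  have hF2 : F ≤ (s + 6) ^ 2 := by rw [hF]; exact Nat.pow_le_pow_left (by omega) 2
  have hM3 : M + 6 ≤ (s + 6) ^ 3 := by
    have h3 : (s + 6) ^ 3 = (s + 6) * (s + 6) * (s + 6) := by ring
    rw [h3]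
    nlinarith [Nat.mul_le_mul hw hw, Nat.mul_le_mul (Nat.mul_le_mul hw hw) (le_refl (s + 6))]
  generalize s + 6 = w at hw hw1 hw2 hW hFf hs1 hF2 hM3 ⊢
  have hJ5 : J ≤ w ^ 5 := by
    rw [hJ]; exact pmul (i := 2) (j := 3) hF2 (by omega)
  have hWb : W ≤ w ^ 14 := by
    rw [hW]; exact XX_bound s F M J w w 1 hw hs1 hF2 hM3 hJ5 hw1
  have hFb : Ff ≤ w ^ 25 := by
    rw [hFf]; exact padd hw (pmul (pmul hWb (pmul (pmul hM3 hs1) hJ5)) hw1) hF2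
  have hYb : Y ≤ w ^ 27 := by
    rw [hY]
    exact padd hw (padd hw hFb (pmul (show M + 4 ≤ w ^ 3 by omega) hs1)) hw2
  have hXb : XX s F M J Y ≤ w ^ 40 := XX_bound s F M J Y w 27 hw hs1 hF2 hM3 hJ5 hYb
  have h2 : 2 ≤ w ^ 1 := by rw [pow_one]; omega
  have h1 : 1 ≤ w ^ 0 := by simp
  have := padd hw (padd hw (padd hw (pmul (pmul h2 hJ5) hs1) hF2) (pmul (pmul hYb hYb) hXb)) h1
  exact this.trans (Nat.pow_le_pow_right (by omega) (by norm_num))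

end PartAux

open PartAux
theorem stmt_0 (L s k : ℕ) (hs : 0 < s) (hL : 3 ≤ L) (hk1 : s + 1 ≤ k) (hk2 : k ≤ L + s)
    (N : ℕ) (hN : GammaS s ≤ N) :
    Nat.card {p : N.Partition // InI L s k p} > Nat.card {p : N.Partition // InD L s p} := by
  obtain ⟨rep, hrep⟩ : ∃ rep : ℕ → Multiset ℕ, ∀ n, (s + 4) ^ 2 ≤ n →
      (L = 3 → Odd s → Odd k → Even n) →
      (rep n).sum = n ∧ ∀ x ∈ rep n, s + 1 ≤ x ∧ x ≤ L + s ∧ x ≠ k ∧ x ≤ s + 4 := by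
    have : ∀ n, ∃ R : Multiset ℕ, (s + 4) ^ 2 ≤ n → (L = 3 → Odd s → Odd k → Even n) →
        R.sum = n ∧ ∀ x ∈ R, s + 1 ≤ x ∧ x ≤ L + s ∧ x ≠ k ∧ x ≤ s + 4 := by
      intro n
      by_cases h1 : (s + 4) ^ 2 ≤ n
      · by_cases h2 : (L = 3 → Odd s → Odd k → Even n)
        · obtain ⟨R, hR⟩ := rep_exists L s k n hL hk1 hk2 h1 h2
          exact ⟨R, fun _ _ => hR⟩
        · exact ⟨0, fun _ h => absurd h h2⟩
      · exact ⟨0, fun h => absurd h h1⟩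
    choose rep hrep using this
    exact ⟨rep, hrep⟩
  obtain ⟨g, hg, hgle⟩ : ∃ g, (6 ≤ L → s + 5 ≤ g ∧ g ≤ L + s ∧ g ≠ k) ∧ g ≤ s + 6 := by
    by_cases h : k = s + 5
    · exact ⟨s + 6, by omega, by omega⟩
    · exact ⟨s + 5, by omega, by omega⟩
  obtain ⟨F, hF⟩ : ∃ F, F = (s + 4) ^ 2 := ⟨_, rfl⟩
  obtain ⟨M, hM⟩ : ∃ M, M = 12 * s := ⟨_, rfl⟩
  obtain ⟨J, hJ⟩ : ∃ J, J = F * M := ⟨_, rfl⟩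
  obtain ⟨W, hW⟩ : ∃ W, W = XX s F M J (s + 6) := ⟨_, rfl⟩
  obtain ⟨Ff, hFf⟩ : ∃ Ff, Ff = W * ((M + 6) * s * J) * (s + 6) + F := ⟨_, rfl⟩
  obtain ⟨Y, hY⟩ : ∃ Y, Y = Ff + (M + 4) * s + (s + 7) := ⟨_, rfl⟩
  have hb := main_bound s F M J W Ff Y hs hF hM hJ hW hFf hY
  have hNb := (gamma_lower s hs).trans hN
  rw [← hF] at hrep
  have hFpos : 1 ≤ F := by rw [hF]; exact Nat.one_le_pow _ _ (by omega)
  have hXpos : 1 ≤ XX s F M J Y := by unfold XX; omega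
  refine final L s k N F M J W Ff Y g (XX s F M J Y) (XX s F M J) rep hs hk1 hM hJ hFpos ?_ ?_
    hrep hg (by omega) ?_ ?_ (by omega) (by omega) (fun b h => XX_mono _ _ _ _ _ _ h.le)
    (by omega) ?_
  · intro b; exact even_two_mul _
  · intro b j hj
    have h1 : ((M + 6) * (b * J + j) + (M + j % 2)) * s ≤ ((M + 6) * (b * J + J) + (M + 1)) * s := by
      have : j % 2 ≤ 1 := by omega
      gcongr
    unfold XX; omega
  · rw [hW]; exact XX_mono _ _ _ _ _ _ hgle
  · intro c j hc hj
    have h1 : c * J + j ≤ (M + 6) * s * J := by nlinarith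
    have h2 : W * (c * J + j) * g ≤ W * ((M + 6) * s * J) * (s + 6) := by gcongr
    omega
  · have h1 : (M + 4) * s ≤ Y := by omega
    have h2 : (M + 3) * s ≤ (M + 4) * s := Nat.mul_le_mul_right _ (by omega)
    have h3 : Y ≤ Y * Y * XX s F M J Y := by
      have hYp : 0 < Y := by omega
      exact (Nat.le_mul_of_pos_left Y hYp).trans (Nat.le_mul_of_pos_right _ hXpos)
    omega
end

section
/- Let s and L be positive integers with L ≥ s+3. Then for every integer N ≥ κ(s), the number of partitions of N lying in C_{L,s} is strictly greater than the number of partitions of N lying in D_{L,s}. -/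
/-- `C_{L,s}`: partitions with smallest part `s`, all parts `≤ L+s`, and no part equal to `L+s-1`. -/
def InC (L s : ℕ) {N : ℕ} (p : N.Partition) : Prop :=
  s ∈ p.parts ∧ (∀ x ∈ p.parts, s ≤ x ∧ x ≤ L + s) ∧ (L + s - 1) ∉ p.parts

/-- `F(s) = (10s−2)(15s−3)+8s`. -/
def Fs (s : ℕ) : ℕ := (10 * s - 2) * (15 * s - 3) + 8 * s

/-- `κ(s) = (12s−1)((s+1)+(s+2)+⋯+(F(s)−1))+1`. -/
def kappa (s : ℕ) : ℕ := (12 * s - 1) * (∑ i ∈ Finset.Icc (s + 1) (Fs s - 1), i) + 1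

/-- Every `t ≥ s+1` is a sum of parts in `[s+1, 2s+1]`. -/
theorem exists_T (s : ℕ) (t : ℕ) (ht : s + 1 ≤ t) :
    ∃ T : Multiset ℕ, T.sum = t ∧ ∀ x ∈ T, s + 1 ≤ x ∧ x ≤ 2 * s + 1 := by
  induction t using Nat.strong_induction_on with
  | _ t ih =>
    by_cases h : t ≤ 2 * s + 1
    · exact ⟨{t}, by simp, by simp; omega⟩
    · obtain ⟨T, hT, hT'⟩ := ih (t - (s + 1)) (by omega) (by omega)
      refine ⟨(s + 1) ::ₘ T, by simp [hT]; omega, ?_⟩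
      intro x hx
      rcases Multiset.mem_cons.1 hx with h1 | h1
      · omega
      · exact hT' x h1

/-- The odd number of copies of `s` attached to `j` copies of `k`. -/
def mOf (k s j : ℕ) : ℕ := 2 * ((k * j - 2 * s - 1) / (2 * s)) + 1

theorem mOf_bounds (k s j : ℕ) (hs : 0 < s) (hk : 2 * s + 2 ≤ k) (hj : 1 ≤ j) :
    s * mOf k s j + s + 1 ≤ k * j ∧ k * j ≤ s * mOf k s j + 3 * s := by
  have h1 : k ≤ k * j := Nat.le_mul_of_pos_right k hj
  have h2 := Nat.div_add_mod (k * j - 2 * s - 1) (2 * s)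
  have h3 := Nat.mod_lt (k * j - 2 * s - 1) (y := 2 * s) (by omega)
  unfold mOf
  generalize (k * j - 2 * s - 1) / (2 * s) = q at *
  have h4 : s * (2 * q + 1) = 2 * s * q + s := by ring
  rw [h4]
  omega

theorem mOf_lt (k s j j' : ℕ) (hs : 0 < s) (hk : 2 * s + 2 ≤ k) (hj : 1 ≤ j) (h : j < j') :
    mOf k s j < mOf k s j' := by
  have a := mOf_bounds k s j hs hk hj
  have b := mOf_bounds k s j' hs hk (by omega)
  have c : k * j + k ≤ k * j' := by
    have : k * (j + 1) ≤ k * j' := Nat.mul_le_mul_left _ h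
    linarith
  have d : s * mOf k s j < s * mOf k s j' := by omega
  exact lt_of_mul_lt_mul_left d (Nat.zero_le _)

/-- The graph of the injection. -/
def InjRel (k s : ℕ) (T : ℕ → Multiset ℕ) (π σ : Multiset ℕ) : Prop :=
  (1 ≤ π.count k ∧ σ = Multiset.replicate (mOf k s (π.count k)) s + π.filter (fun x => x ≠ k)
      + T (k * π.count k - s * mOf k s (π.count k))) ∨
  (∃ i ∈ π, 2 * s ≤ π.count i ∧
      σ + Multiset.replicate (2 * s) i = π + Multiset.replicate (2 * i) s) ∨
  ((∀ i, π.count i < 2 * s) ∧ ∃ x i t, x ∈ π ∧ x = (2 * s + 1) * i + s * (2 * t + 1) ∧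
      s + 1 ≤ i ∧ i ≤ 3 * s ∧
      σ + {x} = π + Multiset.replicate (2 * t + 1) s + Multiset.replicate (2 * s + 1) i)

theorem InjRel_count (k s : ℕ) (hs : 0 < s) (hk : 2 * s + 2 ≤ k) (T : ℕ → Multiset ℕ)
    (hT : ∀ t, s + 1 ≤ t → (T t).sum = t ∧ ∀ x ∈ T t, s + 1 ≤ x ∧ x ≤ 2 * s + 1)
    (π σ : Multiset ℕ) (hπ : ∀ x ∈ π, s + 1 ≤ x ∧ x ≤ k + 1)
    (h : InjRel k s T π σ) :
    (1 ≤ π.count k ∧ σ = Multiset.replicate (mOf k s (π.count k)) s + π.filter (fun x => x ≠ k)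
      + T (k * π.count k - s * mOf k s (π.count k)) ∧ σ.count s = mOf k s (π.count k)) ∨
    (∃ i ∈ π, 2 * s ≤ π.count i ∧
      σ + Multiset.replicate (2 * s) i = π + Multiset.replicate (2 * i) s ∧ σ.count s = 2 * i) ∨
    ((∀ i, π.count i < 2 * s) ∧ ∃ x i t, x ∈ π ∧ x = (2 * s + 1) * i + s * (2 * t + 1) ∧
      s + 1 ≤ i ∧ i ≤ 3 * s ∧
      σ + {x} = π + Multiset.replicate (2 * t + 1) s + Multiset.replicate (2 * s + 1) i ∧
      σ.count s = 2 * t + 1 ∧ 2 * t + 1 < mOf k s 1) := by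
  have hsπ : π.count s = 0 := by
    rw [Multiset.count_eq_zero]; intro h; have := hπ s h; omega
  rcases h with ⟨h1, h2⟩ | ⟨i, hi, h1, h2⟩ | ⟨h0, x, i, t, hx, h1, h2, h3, h4⟩
  · refine Or.inl ⟨h1, h2, ?_⟩
    have b := mOf_bounds k s _ hs hk h1
    have hc : (T (k * π.count k - s * mOf k s (π.count k))).count s = 0 := by
      rw [Multiset.count_eq_zero]; intro h
      have := (hT _ (by omega)).2 s h; omega
    have hf : (π.filter (fun x => x ≠ k)).count s = 0 := by
      rw [Multiset.count_eq_zero]; intro h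
      have := hπ s (Multiset.mem_of_mem_filter h); omega
    have := congrArg (Multiset.count s) h2
    rw [Multiset.count_add, Multiset.count_add, hc, hf, Multiset.count_replicate_self] at this
    simpa using this
  · refine Or.inr (Or.inl ⟨i, hi, h1, h2, ?_⟩)
    have := congrArg (Multiset.count s) h2
    have hne : i ≠ s := by have := hπ i hi; omega
    simpa [Multiset.count_add, Multiset.count_replicate, hne, hsπ] using this
  · refine Or.inr (Or.inr ⟨h0, x, i, t, hx, h1, h2, h3, h4, ?_, ?_⟩)
    · have := congrArg (Multiset.count s) h4
      have hne : i ≠ s := by omega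
      have hne' : s ≠ x := by have := hπ x hx; omega
      simp only [Multiset.count_add, Multiset.count_replicate, Multiset.count_singleton, hne, hne',
        hsπ, if_true, if_false] at this
      omega
    · have b := (mOf_bounds k s 1 hs hk le_rfl).2
      have c := (hπ x hx).2
      have d : (2 * s + 1) * (s + 1) ≤ (2 * s + 1) * i := Nat.mul_le_mul_left _ h2
      have e : s * (2 * t + 1) < s * mOf k s 1 := by nlinarith
      exact lt_of_mul_lt_mul_left e (Nat.zero_le _)

theorem mOf_mono1 (k s j : ℕ) (hs : 0 < s) (hk : 2 * s + 2 ≤ k) (hj : 1 ≤ j) :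
    mOf k s 1 ≤ mOf k s j := by
  rcases Nat.lt_or_ge 1 j with h | h
  · exact (mOf_lt k s 1 j hs hk le_rfl h).le
  · have : j = 1 := by omega
    rw [this]

theorem InjRel_inj (k s : ℕ) (hs : 0 < s) (hk : 2 * s + 2 ≤ k) (T : ℕ → Multiset ℕ)
    (hT : ∀ t, s + 1 ≤ t → (T t).sum = t ∧ ∀ x ∈ T t, s + 1 ≤ x ∧ x ≤ 2 * s + 1)
    (π π' σ : Multiset ℕ) (hπ : ∀ x ∈ π, s + 1 ≤ x ∧ x ≤ k + 1)
    (hπ' : ∀ x ∈ π', s + 1 ≤ x ∧ x ≤ k + 1)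
    (h : InjRel k s T π σ) (h' : InjRel k s T π' σ) : π = π' := by
  have odd : ∀ j, ∃ q, mOf k s j = 2 * q + 1 := fun j => ⟨_, rfl⟩
  rcases InjRel_count k s hs hk T hT π σ hπ h with
    ⟨h1, h2, h3⟩ | ⟨i, hi, h1, h2, h3⟩ | ⟨h0, x, i, t, hx, h1, h2, h3, h4, h5, h6⟩ <;>
  rcases InjRel_count k s hs hk T hT π' σ hπ' h' with
    ⟨g1, g2, g3⟩ | ⟨i', gi, g1, g2, g3⟩ | ⟨g0, x', i', t', gx, g1, g2, g3, g4, g5, g6⟩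
  · have hj : π.count k = π'.count k := by
      rcases lt_trichotomy (π.count k) (π'.count k) with hh | hh | hh
      · have := mOf_lt k s _ _ hs hk h1 hh; omega
      · exact hh
      · have := mOf_lt k s _ _ hs hk g1 hh; omega
    rw [g2, hj] at h2
    have h4 := add_left_cancel (add_right_cancel h2)
    ext a
    by_cases ha : a = k
    · rw [ha, hj]
    · have := congrArg (Multiset.count a) h4
      rw [Multiset.count_filter_of_pos (p := fun x => x ≠ k) ha,
        Multiset.count_filter_of_pos (p := fun x => x ≠ k) ha] at this
      exact this.symm
  · obtain ⟨q, hq⟩ := odd (π.count k); omega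
  · have := mOf_mono1 k s _ hs hk h1; omega
  · obtain ⟨q, hq⟩ := odd (π'.count k); omega
  · have : i = i' := by omega
    subst this
    rw [h2] at g2
    exact add_right_cancel g2
  · omega
  · have := mOf_mono1 k s _ hs hk g1; omega
  · omega
  · have ht : t = t' := by omega
    subst ht
    have hbig : 3 * s < x := by rw [h1]; nlinarith
    have hii : i = i' := by
      by_contra hne
      have c1 := congrArg (Multiset.count i) h4
      have c2 := congrArg (Multiset.count i) g4
      have e1 : i ≠ x := by omega
      have e2 : s ≠ i := by omega
      have e3 : i' ≠ i := fun h => hne h.symm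
      simp only [Multiset.count_add, Multiset.count_replicate, Multiset.count_singleton, e1, e2,
        if_true, if_false] at c1
      simp only [Multiset.count_add, Multiset.count_replicate, e2, e3, if_false] at c2
      have := g0 i
      omega
    subst hii
    have hxx : x = x' := by rw [h1, g1]
    subst hxx
    rw [h4] at g4
    exact add_right_cancel (add_right_cancel g4)

theorem exists_large (s N : ℕ) (hs : 0 < s) (hN : kappa s ≤ N) (π : Multiset ℕ)
    (hsum : π.sum = N) (hπ : ∀ x ∈ π, s + 1 ≤ x) (hc : ∀ i, π.count i < 2 * s) :
    ∃ x ∈ π, Fs s ≤ x := by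
  by_contra! hcon
  have h1 : π.sum ≤ ∑ i ∈ Finset.Icc (s + 1) (Fs s - 1), (12 * s - 1) * i := by
    rw [Finset.sum_multiset_count]
    calc ∑ m ∈ π.toFinset, π.count m • m ≤ ∑ m ∈ π.toFinset, (12 * s - 1) * m := by
          apply Finset.sum_le_sum
          intro i _
          rw [smul_eq_mul]
          apply Nat.mul_le_mul_right
          have := hc i
          omega
      _ ≤ _ := by
          apply Finset.sum_le_sum_of_subset
          intro i hi
          rw [Multiset.mem_toFinset] at hi
          have a := hπ i hi
          have b := hcon i hi
          rw [Finset.mem_Icc]; omega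
  rw [← Finset.mul_sum] at h1
  unfold kappa at hN
  omega

theorem InjRel_exists (k s : ℕ) (hs : 0 < s) (hk : 2 * s + 2 ≤ k) (T : ℕ → Multiset ℕ)
    (hT : ∀ t, s + 1 ≤ t → (T t).sum = t ∧ ∀ x ∈ T t, s + 1 ≤ x ∧ x ≤ 2 * s + 1)
    (N : ℕ) (hN : kappa s ≤ N)
    (π : Multiset ℕ) (hsum : π.sum = N) (hπ : ∀ x ∈ π, s + 1 ≤ x ∧ x ≤ k + 1) :
    ∃ σ, InjRel k s T π σ ∧ σ.sum = N ∧ s ∈ σ ∧ (∀ x ∈ σ, s ≤ x ∧ x ≤ k + 1) ∧ k ∉ σ := by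
  by_cases hkπ : 1 ≤ π.count k
  · refine ⟨_, Or.inl ⟨hkπ, rfl⟩, ?_, ?_, ?_, ?_⟩
    · have b := mOf_bounds k s _ hs hk hkπ
      have hf : (π.filter (fun x => x ≠ k)).sum + k * π.count k = N := by
        have e := Multiset.filter_add_not (fun x => x = k) π
        have e' := congrArg Multiset.sum e
        rw [Multiset.sum_add, Multiset.filter_eq', Multiset.sum_replicate, smul_eq_mul, hsum] at e'
        have : k * π.count k = π.count k * k := mul_comm _ _
        simp only [ne_eq]
        omega
      rw [Multiset.sum_add, Multiset.sum_add, Multiset.sum_replicate, (hT _ (by omega)).1,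
        smul_eq_mul]
      have : mOf k s (π.count k) * s = s * mOf k s (π.count k) := mul_comm _ _
      omega
    · rw [Multiset.mem_add, Multiset.mem_add]
      refine Or.inl (Or.inl (Multiset.mem_replicate.2 ⟨?_, rfl⟩))
      unfold mOf; omega
    · intro x hx
      have b := mOf_bounds k s _ hs hk hkπ
      rw [Multiset.mem_add, Multiset.mem_add] at hx
      rcases hx with (hx | hx) | hx
      · have := Multiset.eq_of_mem_replicate hx; omega
      · have := hπ x (Multiset.mem_of_mem_filter hx); omega
      · have := (hT _ (by omega)).2 x hx; omega
    · intro hx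
      have b := mOf_bounds k s _ hs hk hkπ
      rw [Multiset.mem_add, Multiset.mem_add] at hx
      rcases hx with (hx | hx) | hx
      · have := Multiset.eq_of_mem_replicate hx; omega
      · exact (Multiset.mem_filter.1 hx).2 rfl
      · have := (hT _ (by omega)).2 k hx; omega
  have hk0 : k ∉ π := by
    intro h; exact hkπ (Multiset.one_le_count_iff_mem.2 h)
  by_cases hi : ∃ i ∈ π, 2 * s ≤ π.count i
  · obtain ⟨i, hi, h2⟩ := hi
    have hle : Multiset.replicate (2 * s) i ≤ π := Multiset.le_count_iff_replicate_le.1 h2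
    obtain ⟨ρ, hρ⟩ := Multiset.le_iff_exists_add.1 hle
    have hi' := hπ i hi
    refine ⟨ρ + Multiset.replicate (2 * i) s, Or.inr (Or.inl ⟨i, hi, h2, ?_⟩), ?_, ?_, ?_, ?_⟩
    · conv_rhs => rw [hρ]
      abel
    · have := congrArg Multiset.sum hρ
      rw [hsum, Multiset.sum_add, Multiset.sum_replicate, smul_eq_mul] at this
      rw [Multiset.sum_add, Multiset.sum_replicate, smul_eq_mul, this]
      ring
    · rw [Multiset.mem_add]
      exact Or.inr (Multiset.mem_replicate.2 ⟨by omega, rfl⟩)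
    · intro x hx
      rw [Multiset.mem_add] at hx
      rcases hx with hx | hx
      · have := hπ x (by rw [hρ, Multiset.mem_add]; exact Or.inr hx); omega
      · have := Multiset.eq_of_mem_replicate hx; omega
    · intro hx
      rw [Multiset.mem_add] at hx
      rcases hx with hx | hx
      · exact hk0 (by rw [hρ, Multiset.mem_add]; exact Or.inr hx)
      · have := Multiset.eq_of_mem_replicate hx; omega
  · have hc : ∀ i, π.count i < 2 * s := by
      intro i
      by_cases h : i ∈ π
      · by_contra! h'; exact hi ⟨i, h, h'⟩
      · rw [Multiset.count_eq_zero.2 h]; omega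
    obtain ⟨x, hx, hxF⟩ := exists_large s N hs hN π hsum (fun x hx => (hπ x hx).1) hc
    have hF : 96 * s * s + 8 * s ≤ Fs s := by
      unfold Fs
      have : (8 * s) * (12 * s) ≤ (10 * s - 2) * (15 * s - 3) :=
        Nat.mul_le_mul (by omega) (by omega)
      nlinarith
    have hss : s ≤ s * s := Nat.le_mul_of_pos_right s hs
    have hxk := (hπ x hx).2
    have h96 : 96 * s * s = 96 * (s * s) := by ring
    have hq := Nat.div_add_mod (x - 2 * s - 1) (2 * s)
    have hr := Nat.mod_lt (x - 2 * s - 1) (y := 2 * s) (by omega)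
    generalize (x - 2 * s - 1) / (2 * s) = q at *
    generalize (x - 2 * s - 1) % (2 * s) = r at *
    have hq3 : 3 * s ≤ q := by
      by_contra! h
      have : 2 * s * q ≤ 2 * s * (3 * s) := Nat.mul_le_mul_left _ h.le
      have e : 2 * s * (3 * s) = 6 * (s * s) := by ring
      omega
    obtain ⟨t, rfl⟩ : ∃ t, q = (s + 1 + r) + t := ⟨q - (s + 1 + r), by omega⟩
    have hxe : x = (2 * s + 1) * (s + 1 + r) + s * (2 * t + 1) := by
      have : x = 2 * s * (s + 1 + r + t) + r + 2 * s + 1 := by omega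
      rw [this]; ring
    obtain ⟨ρ, hρ⟩ := Multiset.exists_cons_of_mem hx
    refine ⟨ρ + Multiset.replicate (2 * t + 1) s + Multiset.replicate (2 * s + 1) (s + 1 + r),
      Or.inr (Or.inr ⟨hc, x, s + 1 + r, t, hx, hxe, by omega, by omega, ?_⟩), ?_, ?_, ?_, ?_⟩
    · conv_rhs => rw [hρ, ← Multiset.singleton_add]
      abel
    · have := congrArg Multiset.sum hρ
      rw [hsum, Multiset.sum_cons] at this
      rw [Multiset.sum_add, Multiset.sum_add, Multiset.sum_replicate, Multiset.sum_replicate,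
        smul_eq_mul, smul_eq_mul, this]
      conv_rhs => rw [hxe]
      ring
    · rw [Multiset.mem_add, Multiset.mem_add]
      exact Or.inl (Or.inr (Multiset.mem_replicate.2 ⟨by omega, rfl⟩))
    · intro y hy
      rw [Multiset.mem_add, Multiset.mem_add] at hy
      rcases hy with (hy | hy) | hy
      · have := hπ y (by rw [hρ]; exact Multiset.mem_cons_of_mem hy); omega
      · have := Multiset.eq_of_mem_replicate hy; omega
      · have := Multiset.eq_of_mem_replicate hy; omega
    · intro hy
      rw [Multiset.mem_add, Multiset.mem_add] at hy
      rcases hy with (hy | hy) | hy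
      · exact hk0 (by rw [hρ]; exact Multiset.mem_cons_of_mem hy)
      · have := Multiset.eq_of_mem_replicate hy; omega
      · have := Multiset.eq_of_mem_replicate hy; omega

theorem kappa_large (s : ℕ) (hs : 0 < s) : 3 * s + 1 ≤ kappa s := by
  unfold kappa
  have hF : 96 * s * s + 8 * s ≤ Fs s := by
    unfold Fs
    have : (8 * s) * (12 * s) ≤ (10 * s - 2) * (15 * s - 3) :=
      Nat.mul_le_mul (by omega) (by omega)
    nlinarith
  have h1 : 8 * s ≤ Fs s := by omega
  have h2 : s + 1 ≤ ∑ i ∈ Finset.Icc (s + 1) (Fs s - 1), i :=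
    Finset.single_le_sum (f := fun i => i) (fun i _ => Nat.zero_le i)
      (Finset.mem_Icc.2 ⟨le_rfl, by omega⟩)
  have h3 : (12 * s - 1) * 1 ≤ (12 * s - 1) * (∑ i ∈ Finset.Icc (s + 1) (Fs s - 1), i) :=
    Nat.mul_le_mul_left _ (by omega)
  omega

theorem stmt_3 (L s : ℕ) (hs : 0 < s) (hL : s + 3 ≤ L)
    (N : ℕ) (hN : kappa s ≤ N) :
    Nat.card {p : N.Partition // InC L s p} > Nat.card {p : N.Partition // InD L s p} := by
  obtain ⟨k, hk⟩ : ∃ k, k = L + s - 1 := ⟨_, rfl⟩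
  have hkL : L + s = k + 1 := by omega
  have hk2 : 2 * s + 2 ≤ k := by omega
  have hT0 : ∀ t, ∃ T : Multiset ℕ, s + 1 ≤ t →
      T.sum = t ∧ ∀ x ∈ T, s + 1 ≤ x ∧ x ≤ 2 * s + 1 := by
    intro t
    by_cases h : s + 1 ≤ t
    · obtain ⟨T, hT⟩ := exists_T s t h
      exact ⟨T, fun _ => hT⟩
    · exact ⟨0, fun h' => absurd h' h⟩
  choose T hT using hT0
  have hD : ∀ p : {p : N.Partition // InD L s p}, ∀ x ∈ p.1.parts, s + 1 ≤ x ∧ x ≤ k + 1 := by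
    intro p x hx
    have := p.2.2 x hx
    omega
  have hex : ∀ p : {p : N.Partition // InD L s p}, ∃ q : {p : N.Partition // InC L s p},
      InjRel k s T p.1.parts q.1.parts := by
    intro p
    obtain ⟨σ, h1, h2, h3, h4, h5⟩ :=
      InjRel_exists k s hs hk2 T hT N hN p.1.parts p.1.parts_sum (hD p)
    refine ⟨⟨⟨σ, fun {i} hi => by have := h4 i hi; omega, h2⟩, h3, ?_, ?_⟩, h1⟩
    · intro x hx
      have := h4 x hx
      omega
    · rw [← hk]; exact h5
  choose f hf using hex
  have hinj : Function.Injective f := by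
    intro p p' h
    have h' := hf p'
    rw [← h] at h'
    exact Subtype.ext (Nat.Partition.ext
      (InjRel_inj k s hs hk2 T hT _ _ _ (hD p) (hD p') (hf p) h'))
  have hkap := kappa_large s hs
  obtain ⟨hTs, hTm⟩ := hT (N - 2 * s) (by omega)
  have hmem : ∀ x ∈ Multiset.replicate 2 s + T (N - 2 * s), s ≤ x ∧ x ≤ 2 * s + 1 := by
    intro x hx
    rcases Multiset.mem_add.1 hx with hx | hx
    · have := Multiset.eq_of_mem_replicate hx; omega
    · have := hTm x hx; omega
  let q₀ : {p : N.Partition // InC L s p} :=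
    ⟨⟨Multiset.replicate 2 s + T (N - 2 * s), fun {i} hi => by have := hmem i hi; omega, by
        rw [Multiset.sum_add, Multiset.sum_replicate, hTs, smul_eq_mul]; omega⟩,
      Multiset.mem_add.2 (Or.inl (Multiset.mem_replicate.2 ⟨by omega, rfl⟩)),
      fun x hx => by have := hmem x hx; omega,
      fun hx => by have := hmem _ hx; omega⟩
  have hq₀ : q₀.1.parts.count s = 2 := by
    change (Multiset.replicate 2 s + T (N - 2 * s)).count s = 2
    have : (T (N - 2 * s)).count s = 0 := by
      rw [Multiset.count_eq_zero]; intro h; have := hTm s h; omega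
    rw [Multiset.count_add, this, Multiset.count_replicate_self]
  have hns : q₀ ∉ Set.range f := by
    rintro ⟨p, hp⟩
    have h := hf p
    rw [hp] at h
    rcases InjRel_count k s hs hk2 T hT _ _ (hD p) h with
      ⟨h1, h2, h3⟩ | ⟨i, hi, h1, h2, h3⟩ | ⟨h0, x, i, t, hx, h1, h2, h3, h4, h5, h6⟩
    · unfold mOf at h3; omega
    · have := hD p i hi; omega
    · omega
  have : Fintype {p : N.Partition // InC L s p} := Fintype.ofFinite _
  have : Fintype {p : N.Partition // InD L s p} := Fintype.ofFinite _
  rw [Nat.card_eq_fintype_card, Nat.card_eq_fintype_card]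
  exact Fintype.card_lt_of_injective_of_notMem f hinj hns
end

section
/- Let L, s and k be positive integers with L ≥ 3s+3 and s+1 ≤ k ≤ 2s+1. Then for every integer N ≥ κ''(s), the number of partitions of N lying in I_{L,s,k} is strictly greater than the number of partitions of N lying in D_{L,s}. -/
/-- `F''(s) = (120s(s+1)−2)(180s(s+1)−3)+420s(s+1)`. -/
def Fs'' (s : ℕ) : ℕ :=
  (120 * s * (s + 1) - 2) * (180 * s * (s + 1) - 3) + 420 * s * (s + 1)

/-- `κ''(s) = (300s(s+1)−1)((s+1)+(s+2)+⋯+(F''(s)−1))+1`. -/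
def kappa'' (s : ℕ) : ℕ :=
  (300 * s * (s + 1) - 1) * (∑ i ∈ Finset.Icc (s + 1) (Fs'' s - 1), i) + 1


open Finset PowerSeries

/-- number of partitions of `n` with all parts in `A` -/
def cntP (A : Finset ℕ) (n : ℕ) : ℕ :=
  ((Finset.univ : Finset n.Partition).filter (fun p => ∀ x ∈ p.parts, x ∈ A)).card

lemma cntP_zero (A : Finset ℕ) : cntP A 0 = 1 := by
  unfold cntP
  rw [Finset.filter_true_of_mem]
  · simp
  · intro p _ x hx
    simp at hx

/-- remove `m` copies of `i` -/
lemma cnt_remove_le (A : Finset ℕ) (i m n : ℕ) (hmn : i * m ≤ n) :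
    ((Finset.univ : Finset n.Partition).filter
      (fun p => (∀ x ∈ p.parts, x ∈ A) ∧ m ≤ p.parts.count i)).card ≤ cntP A (n - i * m) := by
  classical
  unfold cntP
  have key : ∀ p : n.Partition, m ≤ p.parts.count i →
      (p.parts - Multiset.replicate m i) + Multiset.replicate m i = p.parts := by
    intro p hp
    exact tsub_add_cancel_of_le (Multiset.le_count_iff_replicate_le.mp hp)
  refine Finset.card_le_card_of_injOn
    (fun p => Nat.Partition.ofSums (n - i * m)
      (if m ≤ p.parts.count i then p.parts - Multiset.replicate m i else {n - i * m}) ?_) ?_ ?_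
  · split_ifs with h
    · have h1 := congrArg Multiset.sum (key p h)
      rw [Multiset.sum_add, Multiset.sum_replicate, p.parts_sum, smul_eq_mul, mul_comm] at h1
      omega
    · simp
  · intro p hp
    simp only [Finset.coe_filter, Finset.mem_univ, true_and, Set.mem_ofPred_eq] at hp ⊢
    intro x hx
    simp only [hp.2, if_true, Nat.Partition.ofSums_parts, Multiset.mem_filter] at hx
    exact hp.1 x (Multiset.mem_of_le (Multiset.sub_le_self _ _) hx.1)
  · intro p hp q hq hpq
    simp only [Finset.coe_filter, Finset.mem_univ, true_and, Set.mem_ofPred_eq] at hp hq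
    have h2 := congrArg Nat.Partition.parts hpq
    simp only [hp.2, hq.2, if_true, Nat.Partition.ofSums_parts] at h2
    have aux : ∀ p : n.Partition, (p.parts - Multiset.replicate m i).filter (· ≠ 0)
        = p.parts - Multiset.replicate m i := by
      intro p
      rw [Multiset.filter_eq_self]
      intro a ha
      exact (p.parts_pos (Multiset.mem_of_le (Multiset.sub_le_self _ _) ha)).ne'
    rw [aux, aux] at h2
    ext1
    rw [← key p hp.2, ← key q hq.2, h2]

lemma cnt_remove_ge (A : Finset ℕ) (i n : ℕ) (hi : 0 < i) (hA : i ∈ A) (hmn : i ≤ n) :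
    cntP A (n - i) ≤ ((Finset.univ : Finset n.Partition).filter
      (fun p => (∀ x ∈ p.parts, x ∈ A) ∧ i ∈ p.parts)).card := by
  classical
  unfold cntP
  refine Finset.card_le_card_of_injOn
    (fun p => ⟨i ::ₘ p.parts, ?_, ?_⟩) ?_ ?_
  · intro j hj
    rcases Multiset.mem_cons.mp hj with h | h
    · omega
    · exact p.parts_pos h
  · rw [Multiset.sum_cons, p.parts_sum]; omega
  · intro p hp
    simp only [Finset.coe_filter, Finset.mem_univ, true_and, Set.mem_ofPred_eq] at hp ⊢
    refine ⟨?_, Multiset.mem_cons_self _ _⟩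
    intro x hx
    rcases Multiset.mem_cons.mp hx with h | h
    · rw [h]; exact hA
    · exact hp x h
  · intro p _ q _ hpq
    have h2 := congrArg Nat.Partition.parts hpq
    ext1
    simpa using h2

lemma cnt_split (A : Finset ℕ) (i n : ℕ) (hA : i ∉ A) :
    cntP (insert i A) n = cntP A n + ((Finset.univ : Finset n.Partition).filter
      (fun p => (∀ x ∈ p.parts, x ∈ insert i A) ∧ i ∈ p.parts)).card := by
  classical
  unfold cntP
  rw [← Finset.card_filter_add_card_filter_not (p := fun p : n.Partition => i ∉ p.parts)]
  rw [Finset.filter_filter, Finset.filter_filter]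
  congr 2
  · apply Finset.filter_congr
    intro p _
    constructor
    · rintro ⟨h1, h2⟩ x hx
      rcases Finset.mem_insert.mp (h1 x hx) with h | h
      · exact absurd (h ▸ hx) h2
      · exact h
    · intro h
      exact ⟨fun x hx => Finset.mem_insert_of_mem (h x hx), fun hi => hA (h i hi)⟩
  · apply Finset.filter_congr
    intro p _
    rw [not_not]

lemma cntP_insert (A : Finset ℕ) (i n : ℕ) (hi : 0 < i) (hA : i ∉ A) :
    cntP (insert i A) n = cntP A n + (if i ≤ n then cntP (insert i A) (n - i) else 0) := by
  classical
  rw [cnt_split A i n hA]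
  congr 1
  split_ifs with h
  · apply le_antisymm
    · have := cnt_remove_le (insert i A) i 1 n (by omega)
      rw [mul_one] at this
      refine le_trans (le_of_eq ?_) this
      congr 1
      apply Finset.filter_congr
      intro p _
      rw [Multiset.one_le_count_iff_mem]
    · exact cnt_remove_ge _ i n hi (Finset.mem_insert_self _ _) h
  · rw [Finset.card_eq_zero, Finset.filter_eq_empty_iff]
    rintro p _ ⟨_, h2⟩
    exact h (Nat.Partition.le_of_mem_parts h2)

/-- each large partition has a part `i` with `i * mult(i) ≥ V` -/
lemma exists_heavy (V m : ℕ) (hV : 0 < V) (hm : V * V ≤ m) (p : m.Partition) :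
    ∃ i ∈ p.parts, V ≤ i * p.parts.count i := by
  by_contra! h
  have h1 : p.parts.sum = ∑ i ∈ p.parts.toFinset, p.parts.count i * i := by
    rw [Finset.sum_multiset_count]; simp
  have hsub : p.parts.toFinset ⊆ Finset.range V := by
    intro i hi
    rw [Multiset.mem_toFinset] at hi
    have h2 := h i hi
    have h3 := Multiset.one_le_count_iff_mem.mpr hi
    rw [Finset.mem_range]
    nlinarith
  have h2 : ∑ i ∈ p.parts.toFinset, p.parts.count i * i ≤ p.parts.toFinset.card * (V - 1) := by
    rw [← smul_eq_mul]
    apply Finset.sum_le_card_nsmul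
    intro i hi
    rw [Multiset.mem_toFinset] at hi
    have := h i hi
    rw [mul_comm]
    omega
  have h3 := Finset.card_le_card hsub
  rw [Finset.card_range] at h3
  rw [p.parts_sum] at h1
  have h4 : p.parts.toFinset.card * (V - 1) ≤ V * (V - 1) := Nat.mul_le_mul_right _ h3
  have h5 : V * (V - 1) < V * V := Nat.mul_lt_mul_of_pos_left (by omega) hV
  omega

/-- the weight removed for part `i` -/
def wt (V i : ℕ) : ℕ := i * ((V + i - 1) / i)

lemma wt_ge (V i : ℕ) (hi : 0 < i) : V ≤ wt V i := by
  unfold wt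
  have := Nat.div_add_mod (V + i - 1) i
  have h2 := Nat.mod_lt (V + i - 1) hi
  omega

lemma wt_ge' (V i : ℕ) (hV : 0 < V) (hi : 0 < i) : i ≤ wt V i := by
  unfold wt
  have : 1 ≤ (V + i - 1) / i := by rw [Nat.one_le_div_iff hi]; omega
  nlinarith

lemma wt_div_le (V i c : ℕ) (hi : 0 < i) (h : V ≤ i * c) : (V + i - 1) / i ≤ c := by
  rw [← Nat.lt_succ_iff, Nat.div_lt_iff_lt_mul hi]
  have : (c + 1) * i = i * c + i := by ring
  rw [Nat.succ_eq_add_one, this]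
  omega

lemma cntP_heavy (A : Finset ℕ) (V m : ℕ) (hV : 0 < V) (hm : V * V ≤ m) :
    cntP A m ≤ ∑ i ∈ (Finset.Icc 1 m).filter (fun i => wt V i ≤ m), cntP A (m - wt V i) := by
  classical
  have : ∀ i ∈ (Finset.Icc 1 m).filter (fun i => wt V i ≤ m),
      ((Finset.univ : Finset m.Partition).filter
      (fun p => (∀ x ∈ p.parts, x ∈ A) ∧ (V + i - 1) / i ≤ p.parts.count i)).card
        ≤ cntP A (m - wt V i) := by
    intro i hi
    exact cnt_remove_le A i _ m (Finset.mem_filter.mp hi).2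
  refine le_trans ?_ (Finset.sum_le_sum this)
  refine le_trans (Finset.card_le_card ?_) Finset.card_biUnion_le
  intro p hp
  rw [Finset.mem_filter] at hp
  obtain ⟨i, hi, hiV⟩ := exists_heavy V m hV hm p
  have hi0 := p.parts_pos hi
  have hc := wt_div_le V i _ hi0 hiV
  rw [Finset.mem_biUnion]
  refine ⟨i, ?_, ?_⟩
  · rw [Finset.mem_filter, Finset.mem_Icc]
    refine ⟨⟨hi0, Nat.Partition.le_of_mem_parts hi⟩, ?_⟩
    have h1 : (Multiset.replicate (p.parts.count i) i).sum ≤ p.parts.sum := by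
      obtain ⟨t, ht⟩ := Multiset.le_iff_exists_add.mp
        (Multiset.le_count_iff_replicate_le.mp (le_refl (p.parts.count i)))
      have h5 := congrArg Multiset.sum ht
      rw [Multiset.sum_add] at h5
      omega
    rw [Multiset.sum_replicate, p.parts_sum, smul_eq_mul, mul_comm] at h1
    exact le_trans (Nat.mul_le_mul_left i hc) h1
  · rw [Finset.mem_filter]
    exact ⟨Finset.mem_univ _, hp.2, hc⟩

/-- load estimate -/
lemma load (A : Finset ℕ) (V N : ℕ) (hV : 0 < V) (hN : V * V + V ≤ N) :
    ∑ v ∈ Finset.range V, cntP A (N - v) ≤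
      ∑ v ∈ Finset.Icc V N, v * cntP A (N - v) := by
  classical
  calc ∑ v ∈ Finset.range V, cntP A (N - v)
      ≤ ∑ v ∈ Finset.range V, ∑ i ∈ (Finset.Icc 1 N).filter (fun i => v + wt V i ≤ N),
          cntP A (N - (v + wt V i)) := by
        apply Finset.sum_le_sum
        intro v hv
        rw [Finset.mem_range] at hv
        refine le_trans (cntP_heavy A V (N - v) hV (by omega)) ?_
        have : ∀ i, N - (v + wt V i) = N - v - wt V i := fun i => by omega
        simp only [this]
        apply Finset.sum_le_sum_of_subset
        intro i hi
        rw [Finset.mem_filter, Finset.mem_Icc] at hi ⊢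
        omega
    _ = ∑ i ∈ Finset.Icc 1 N, ∑ v ∈ (Finset.range V).filter (fun v => v + wt V i ≤ N),
          cntP A (N - (v + wt V i)) := by
        simp only [Finset.sum_filter]
        rw [Finset.sum_comm]
    _ ≤ ∑ i ∈ Finset.Icc 1 N, ∑ u ∈ (Finset.Icc V N).filter (fun u => i ≤ u),
          cntP A (N - u) := by
        apply Finset.sum_le_sum
        intro i hi
        rw [Finset.mem_Icc] at hi
        rw [← Finset.sum_image (s := (Finset.range V).filter (fun v => v + wt V i ≤ N))
          (g := fun v => v + wt V i) (f := fun u => cntP A (N - u))]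
        · apply Finset.sum_le_sum_of_subset
          intro u hu
          rw [Finset.mem_image] at hu
          obtain ⟨v, hv, rfl⟩ := hu
          rw [Finset.mem_filter] at hv
          rw [Finset.mem_filter, Finset.mem_Icc]
          have := wt_ge V i hi.1
          have := wt_ge' V i hV hi.1
          omega
        · intro x _ y _ h
          simpa using h
    _ = ∑ u ∈ Finset.Icc V N, ∑ i ∈ (Finset.Icc 1 N).filter (fun i => i ≤ u),
          cntP A (N - u) := by
        simp only [Finset.sum_filter]
        rw [Finset.sum_comm]
    _ ≤ ∑ v ∈ Finset.Icc V N, v * cntP A (N - v) := by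
        apply Finset.sum_le_sum
        intro u _
        rw [Finset.sum_const, smul_eq_mul]
        apply Nat.mul_le_mul_right
        calc _ ≤ (Finset.Icc 1 u).card := by
              apply Finset.card_le_card
              intro i hi
              rw [Finset.mem_filter, Finset.mem_Icc] at hi
              rw [Finset.mem_Icc]
              omega
          _ = u := by simp

/-- abstract positivity -/
lemma conv_pos (A : Finset ℕ) (V N : ℕ) (hV : 0 < V) (hN : V * V + V ≤ N) (h : ℕ → ℚ) (B : ℚ)
    (hB : 0 ≤ B) (h1 : ∀ v, -B ≤ h v) (h2 : ∀ v, V ≤ v → B * v < h v) :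
    0 < ∑ x ∈ Finset.HasAntidiagonal.antidiagonal N, h x.1 * (cntP A x.2 : ℚ) := by
  rw [Finset.Nat.sum_antidiagonal_eq_sum_range_succ (fun i j => h i * (cntP A j : ℚ))]
  have hsplit : Finset.range (N + 1) = Finset.range V ∪ Finset.Icc V N := by
    ext x; simp; omega
  have hdis : Disjoint (Finset.range V) (Finset.Icc V N) := by
    rw [Finset.disjoint_left]; intro x; simp; omega
  rw [Nat.succ_eq_add_one, hsplit, Finset.sum_union hdis]
  have e1 : -(B * ∑ v ∈ Finset.range V, (cntP A (N - v) : ℚ)) ≤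
      ∑ v ∈ Finset.range V, h v * (cntP A (N - v) : ℚ) := by
    rw [Finset.mul_sum, ← Finset.sum_neg_distrib]
    apply Finset.sum_le_sum
    intro v _
    have := mul_le_mul_of_nonneg_right (h1 v) (Nat.cast_nonneg (α := ℚ) (cntP A (N - v)))
    linarith
  have e2 : B * ∑ v ∈ Finset.Icc V N, (v * cntP A (N - v) : ℚ) <
      ∑ v ∈ Finset.Icc V N, h v * (cntP A (N - v) : ℚ) := by
    rw [Finset.mul_sum]
    apply Finset.sum_lt_sum
    · intro v hv
      rw [Finset.mem_Icc] at hv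
      have := mul_le_mul_of_nonneg_right (h2 v hv.1).le (Nat.cast_nonneg (α := ℚ) (cntP A (N - v)))
      linarith
    · refine ⟨N, ?_, ?_⟩
      · rw [Finset.mem_Icc]; constructor
        · nlinarith
        · exact le_rfl
      · have := h2 N (by nlinarith)
        simp [cntP_zero]
        linarith
  have e3 : (∑ v ∈ Finset.range V, (cntP A (N - v) : ℚ)) ≤
      ∑ v ∈ Finset.Icc V N, (v * cntP A (N - v) : ℚ) := by
    exact_mod_cast load A V N hV hN
  have := mul_le_mul_of_nonneg_left e3 hB
  linarith


/-- geometric series -/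
noncomputable def geo (a : ℕ) : ℚ⟦X⟧ := (1 - X ^ a)⁻¹

lemma geo_mul (a : ℕ) (ha : 0 < a) : (1 - X ^ a) * geo a = 1 := by
  unfold geo
  apply PowerSeries.mul_inv_cancel
  simp [ha.ne']

lemma geo_rec (a : ℕ) (ha : 0 < a) (f : ℚ⟦X⟧) (n : ℕ) :
    coeff n (geo a * f) = coeff n f + (if a ≤ n then coeff (n - a) (geo a * f) else 0) := by
  have h : geo a * f = f + X ^ a * (geo a * f) := by
    linear_combination f * geo_mul a ha
  conv_lhs => rw [h]
  rw [map_add, coeff_X_pow_mul']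

noncomputable def serP (A : Finset ℕ) : ℚ⟦X⟧ := PowerSeries.mk (fun n => (cntP A n : ℚ))

lemma serP_insert (A : Finset ℕ) (i : ℕ) (hi : 0 < i) (hA : i ∉ A) :
    serP (insert i A) = geo i * serP A := by
  have h : (1 - X ^ i) * serP (insert i A) = serP A := by
    ext n
    rw [sub_mul, one_mul, map_sub, coeff_X_pow_mul']
    unfold serP
    simp only [coeff_mk]
    rw [cntP_insert A i n hi hA]
    split_ifs <;> simp
  rw [← h, ← mul_assoc, mul_comm (geo i), geo_mul i hi, one_mul]

lemma geo_upper (c : ℕ) (hc : 0 < c) (f : ℚ⟦X⟧) (U : ℕ → ℚ) (hU : ∀ n, 0 ≤ U n)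
    (h : ∀ n, coeff n f ≤ U (n + c) - U n) (n : ℕ) : coeff n (geo c * f) ≤ U (n + c) := by
  induction n using Nat.strong_induction_on with
  | _ n ih =>
    rw [geo_rec c hc]
    have := h n
    have := hU n
    split_ifs with hcn
    · have h3 := ih (n - c) (by omega)
      rw [Nat.sub_add_cancel hcn] at h3
      linarith
    · linarith

lemma geo_lower (c : ℕ) (hc : 0 < c) (f : ℚ⟦X⟧) (U : ℕ → ℚ)
    (h : ∀ n, U (n + c) - U n ≤ coeff (n + c) f) (h0 : ∀ n, n < c → U n ≤ coeff n f) (n : ℕ) :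
    U n ≤ coeff n (geo c * f) := by
  induction n using Nat.strong_induction_on with
  | _ n ih =>
    rw [geo_rec c hc]
    split_ifs with hcn
    · have h3 := ih (n - c) (by omega)
      have h4 := h (n - c)
      rw [Nat.sub_add_cancel hcn] at h4
      linarith
    · have := h0 n (by omega)
      linarith

lemma geo_nonneg (c : ℕ) (hc : 0 < c) (f : ℚ⟦X⟧) (h : ∀ n, 0 ≤ coeff n f) (n : ℕ) :
    0 ≤ coeff n (geo c * f) :=
  geo_lower c hc f (fun _ => 0) (fun n => by simpa using h _) (fun n _ => h n) n

lemma coeff_geo_one (a : ℕ) (ha : 0 < a) (n : ℕ) :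
    coeff n (geo a * 1) = if a ∣ n then (1 : ℚ) else 0 := by
  induction n using Nat.strong_induction_on with
  | _ n ih =>
    rw [geo_rec a ha, coeff_one]
    by_cases hn : a ≤ n
    · rw [if_pos hn, ih (n - a) (by omega), if_neg (by omega)]
      have : a ∣ n - a ↔ a ∣ n := by
        obtain ⟨m, rfl⟩ := Nat.exists_eq_add_of_le' hn
        simp
      simp only [this, zero_add]
    · rw [if_neg hn]
      by_cases h0 : n = 0
      · simp [h0]
      · rw [if_neg h0, if_neg (fun h => hn (Nat.le_of_dvd (by omega) h)), zero_add]

lemma coeff_geo_two (a : ℕ) (ha : 0 < a) (n : ℕ) :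
    coeff n (geo (a + 1) * (geo a * 1)) = ((n / a : ℕ) : ℚ) - ((n + a) / (a + 1) : ℕ) + 1 := by
  induction n using Nat.strong_induction_on with
  | _ n ih =>
    rw [geo_rec (a + 1) (by omega), coeff_geo_one a ha]
    by_cases hn : a + 1 ≤ n
    · rw [if_pos hn, ih (n - (a + 1)) (by omega)]
      have e1 : (n + a) / (a + 1) = (n - (a + 1) + a) / (a + 1) + 1 := by
        rw [← Nat.add_div_right _ (by omega)]; congr 1; omega
      have e2 : n / a = (n - (a + 1)) / a + 1 + (if a ∣ n then 1 else 0) := by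
        obtain ⟨m, rfl⟩ : ∃ m, n = m + 1 + a := ⟨n - (a + 1), by omega⟩
        have : m + 1 + a - (a + 1) = m := by omega
        rw [this, Nat.add_div_right _ ha, Nat.succ_div]
        have : a ∣ m + 1 + a ↔ a ∣ m + 1 := by simp
        simp only [this]
        split_ifs <;> omega
      rw [e1, e2]
      push_cast
      split_ifs <;> ring
    · rw [if_neg hn]
      by_cases h0 : n = 0
      · subst h0
        simp [Nat.div_eq_of_lt (show a < a + 1 by omega)]
      · have e1 : (n + a) / (a + 1) = 1 := by
          rw [Nat.div_eq_iff (by omega)]; omega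
        rw [e1]
        by_cases hna : n = a
        · subst hna; simp [Nat.div_self ha]
        · rw [Nat.div_eq_of_lt (by omega), if_neg (fun h => by
            have := Nat.le_of_dvd (by omega) h; omega)]
          simp

lemma geo_two_bounds (a : ℕ) (ha : 0 < a) (n : ℕ) :
    (n : ℚ) - a * (a + 1) ≤ coeff n (geo (a + 1) * (geo a * 1)) * (a * (a + 1)) ∧
    coeff n (geo (a + 1) * (geo a * 1)) * (a * (a + 1)) ≤ (n : ℚ) + a * (a + 1) := by
  rw [coeff_geo_two a ha]
  have q1 := Nat.div_add_mod n a
  have q2 := Nat.mod_lt n ha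
  have r1 := Nat.div_add_mod (n + a) (a + 1)
  have r2 := Nat.mod_lt (n + a) (show 0 < a + 1 by omega)
  generalize n / a = q at *
  generalize n % a = q' at *
  generalize (n + a) / (a + 1) = r at *
  generalize (n + a) % (a + 1) = r' at *
  have Q1 : (a : ℚ) * q + q' = n := by exact_mod_cast q1
  have Q2 : (q' : ℚ) + 1 ≤ a := by exact_mod_cast q2
  have R1 : ((a : ℚ) + 1) * r + r' = n + a := by exact_mod_cast r1
  have R2 : (r' : ℚ) ≤ a := by exact_mod_cast Nat.lt_succ_iff.mp r2
  have q0 : (0 : ℚ) ≤ q' := Nat.cast_nonneg _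
  have r0 : (0 : ℚ) ≤ r' := Nat.cast_nonneg _
  have a0 : (1 : ℚ) ≤ a := by exact_mod_cast ha
  have e : ((q : ℚ) - r + 1) * (a * (a + 1)) = (a + 1) * (n - q') - a * (n + a - r') + a * (a + 1) := by
    linear_combination (a + 1 : ℚ) * Q1 - (a : ℚ) * R1
  rw [e]
  constructor <;> nlinarith

lemma up1 (c : ℕ) (hc : 0 < c) (f : ℚ⟦X⟧) (K Y : ℚ) (hK : 0 < K) (hY : 0 ≤ Y)
    (h : ∀ n, coeff n f * K ≤ n + Y) (n : ℕ) :
    coeff n (geo c * f) * (K * (2 * c)) ≤ (n + (Y + c)) ^ 2 := by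
  have c0 : (0 : ℚ) < c := by exact_mod_cast hc
  have hp : 0 < K * (2 * c) := by positivity
  rw [← le_div_iff₀ hp]
  have := geo_upper c hc f (fun n => ((n : ℚ) + Y) ^ 2 / (K * (2 * c))) (fun n => by positivity) ?_ n
  · refine this.trans (le_of_eq ?_)
    push_cast; ring
  · intro n
    rw [← sub_div, le_div_iff₀ hp]
    have h1 := mul_le_mul_of_nonneg_right (h n) (show 0 ≤ 2 * (c : ℚ) by positivity)
    push_cast
    nlinarith

lemma up2 (c : ℕ) (hc : 0 < c) (f : ℚ⟦X⟧) (K Y : ℚ) (hK : 0 < K) (hY : 0 ≤ Y)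
    (h : ∀ n, coeff n f * K ≤ (n + Y) ^ 2) (n : ℕ) :
    coeff n (geo c * f) * (K * (3 * c)) ≤ (n + (Y + c)) ^ 3 := by
  have c0 : (0 : ℚ) < c := by exact_mod_cast hc
  have hp : 0 < K * (3 * c) := by positivity
  rw [← le_div_iff₀ hp]
  have := geo_upper c hc f (fun n => ((n : ℚ) + Y) ^ 3 / (K * (3 * c))) (fun n => by positivity) ?_ n
  · refine this.trans (le_of_eq ?_)
    push_cast; ring
  · intro n
    rw [← sub_div, le_div_iff₀ hp]
    have h1 := mul_le_mul_of_nonneg_right (h n) (show 0 ≤ 3 * (c : ℚ) by positivity)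
    have h2 : (0 : ℚ) ≤ 3 * c ^ 2 * (n + Y) + c ^ 3 := by positivity
    push_cast
    nlinarith

lemma cvx2 (x c : ℚ) (hc : 0 ≤ c) : (max (x + c) 0) ^ 2 - (max x 0) ^ 2 ≤ 2 * c * max (x + c) 0 := by
  rcases le_total 0 x with h | h
  · rw [max_eq_left h, max_eq_left (by linarith)]; nlinarith
  · rw [max_eq_right h]
    rcases le_total 0 (x + c) with h' | h'
    · rw [max_eq_left h']; nlinarith
    · rw [max_eq_right h']; simp

lemma cvx3 (x c : ℚ) (hc : 0 ≤ c) :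
    (max (x + c) 0) ^ 3 - (max x 0) ^ 3 ≤ 3 * c * (max (x + c) 0) ^ 2 := by
  rcases le_total 0 x with h | h
  · rw [max_eq_left h, max_eq_left (by linarith)]
    have : 0 ≤ c ^ 2 * x := by positivity
    have : 0 ≤ c ^ 3 := by positivity
    nlinarith
  · rw [max_eq_right h]
    rcases le_total 0 (x + c) with h' | h'
    · rw [max_eq_left h']
      have : 0 ≤ (x + c) ^ 2 * (3 * c - (x + c)) := mul_nonneg (sq_nonneg _) (by linarith)
      nlinarith
    · rw [max_eq_right h']; simp

lemma low1 (c : ℕ) (hc : 0 < c) (f : ℚ⟦X⟧) (K Y : ℚ) (hK : 0 < K) (hY : 0 ≤ Y)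
    (h : ∀ n : ℕ, max (n - Y) 0 ≤ coeff n f * K) (n : ℕ) :
    (max (n - Y) 0) ^ 2 ≤ coeff n (geo c * f) * (K * (2 * c)) := by
  have c0 : (0 : ℚ) < c := by exact_mod_cast hc
  have hp : 0 < K * (2 * c) := by positivity
  rw [← div_le_iff₀ hp]
  refine geo_lower c hc f (fun n => (max ((n : ℚ) - Y) 0) ^ 2 / (K * (2 * c))) ?_ ?_ n
  · intro n
    rw [← sub_div, div_le_iff₀ hp]
    have h1 := mul_le_mul_of_nonneg_right (h (n + c)) (show 0 ≤ 2 * (c : ℚ) by positivity)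
    have h2 := cvx2 ((n : ℚ) - Y) c c0.le
    have e : ((n + c : ℕ) : ℚ) - Y = n - Y + c := by push_cast; ring
    simp only [e] at *
    linarith
  · intro n hn
    rw [div_le_iff₀ hp]
    have h1 := mul_le_mul_of_nonneg_right (h n) (show 0 ≤ 2 * (c : ℚ) by positivity)
    have h2 := cvx2 ((n : ℚ) - Y - c) c c0.le
    have hnc : (n : ℚ) < c := by exact_mod_cast hn
    rw [max_eq_right (show (n : ℚ) - Y - c ≤ 0 by linarith), sub_add_cancel] at h2
    linarith

lemma low2 (c : ℕ) (hc : 0 < c) (f : ℚ⟦X⟧) (K Y : ℚ) (hK : 0 < K) (hY : 0 ≤ Y)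
    (h : ∀ n : ℕ, (max (n - Y) 0) ^ 2 ≤ coeff n f * K) (n : ℕ) :
    (max (n - Y) 0) ^ 3 ≤ coeff n (geo c * f) * (K * (3 * c)) := by
  have c0 : (0 : ℚ) < c := by exact_mod_cast hc
  have hp : 0 < K * (3 * c) := by positivity
  rw [← div_le_iff₀ hp]
  refine geo_lower c hc f (fun n => (max ((n : ℚ) - Y) 0) ^ 3 / (K * (3 * c))) ?_ ?_ n
  · intro n
    rw [← sub_div, div_le_iff₀ hp]
    have h1 := mul_le_mul_of_nonneg_right (h (n + c)) (show 0 ≤ 3 * (c : ℚ) by positivity)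
    have h2 := cvx3 ((n : ℚ) - Y) c c0.le
    have e : ((n + c : ℕ) : ℚ) - Y = n - Y + c := by push_cast; ring
    simp only [e] at *
    linarith
  · intro n hn
    rw [div_le_iff₀ hp]
    have h1 := mul_le_mul_of_nonneg_right (h n) (show 0 ≤ 3 * (c : ℚ) by positivity)
    have h2 := cvx3 ((n : ℚ) - Y - c) c c0.le
    have hnc : (n : ℚ) < c := by exact_mod_cast hn
    rw [max_eq_right (show (n : ℚ) - Y - c ≤ 0 by linarith), sub_add_cancel] at h2
    linarith

/-- the three auxiliary parts -/
noncomputable def E3 (s : ℕ) : ℚ⟦X⟧ :=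
  geo (2 * s + 4) * (geo (2 * s + 2 + 1) * (geo (2 * s + 2) * 1))

lemma E3_nonneg (s n : ℕ) : 0 ≤ coeff n (E3 s) := by
  apply geo_nonneg _ (by omega)
  apply geo_nonneg _ (by omega)
  apply geo_nonneg _ (by omega)
  intro n
  rw [coeff_one]; split_ifs <;> norm_num

lemma poly1 (s x : ℚ) (hs : 1 ≤ s) (hx : 0 ≤ x) :
    -(30000000 * s ^ 9) ≤ (s + 1) * (max (x - 21 * s ^ 2) 0) ^ 3 - s * (x + 29 * s ^ 2) ^ 3 := by
  have m1 : s ^ 7 ≤ s ^ 9 := pow_le_pow_right₀ hs (by norm_num)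
  have m2 : s ^ 8 ≤ s ^ 9 := pow_le_pow_right₀ hs (by norm_num)
  have m9 : 0 < s ^ 9 := by positivity
  rcases le_total (x - 21 * s ^ 2) 0 with h | h
  · rw [max_eq_right h]
    have : (x + 29 * s ^ 2) ^ 3 ≤ (50 * s ^ 2) ^ 3 :=
      pow_le_pow_left₀ (by positivity) (by linarith) 3
    have := mul_le_mul_of_nonneg_left this (show 0 ≤ s by linarith)
    nlinarith
  · rw [max_eq_left h]
    obtain ⟨w, hw⟩ : ∃ w, w = x - 21 * s ^ 2 := ⟨_, rfl⟩
    have hx' : x + 29 * s ^ 2 = w + 50 * s ^ 2 := by rw [hw]; ring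
    rw [hx', ← hw]
    rw [← hw] at h
    have e : (s + 1) * w ^ 3 - s * (w + 50 * s ^ 2) ^ 3 =
      w ^ 3 - 150 * s ^ 3 * w ^ 2 - 7500 * s ^ 5 * w - 125000 * s ^ 7 := by ring
    rw [e]
    rcases le_total w (400 * s ^ 3) with h1 | h1
    · have a1 : w ^ 2 ≤ (400 * s ^ 3) ^ 2 := pow_le_pow_left₀ h h1 2
      have a2 : s ^ 3 * w ^ 2 ≤ s ^ 3 * (400 * s ^ 3) ^ 2 :=
        mul_le_mul_of_nonneg_left a1 (by positivity)
      have a3 : s ^ 5 * w ≤ s ^ 5 * (400 * s ^ 3) := mul_le_mul_of_nonneg_left h1 (by positivity)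
      have a4 : 0 ≤ w ^ 3 := by positivity
      nlinarith
    · have b1 : 400 * s ^ 3 * w ^ 2 ≤ w * w ^ 2 := mul_le_mul_of_nonneg_right h1 (by positivity)
      have b0 : s ^ 3 * (400 * s ^ 3) ≤ s ^ 3 * w := mul_le_mul_of_nonneg_left h1 (by positivity)
      have b5 : s ^ 5 ≤ s ^ 6 := pow_le_pow_right₀ hs (by norm_num)
      have b2 : (400 * s ^ 5) * w ≤ s ^ 3 * w * w :=
        mul_le_mul_of_nonneg_right (by nlinarith) h
      have b3 : s ^ 5 * (400 * s ^ 3) ≤ s ^ 5 * w := mul_le_mul_of_nonneg_left h1 (by positivity)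
      nlinarith

lemma poly2 (s x : ℚ) (hs : 1 ≤ s) (hx : 10000 * s ^ 5 ≤ x) :
    30000000 * s ^ 9 * x <
      (s + 1) * (max (x - 21 * s ^ 2) 0) ^ 3 - s * (x + 29 * s ^ 2) ^ 3 := by
  have p5 : 0 < s ^ 5 := by positivity
  have m25 : s ^ 2 ≤ s ^ 5 := pow_le_pow_right₀ hs (by norm_num)
  have m35 : s ^ 3 ≤ s ^ 5 := pow_le_pow_right₀ hs (by norm_num)
  have hxp : 0 < x := by linarith
  obtain ⟨w, hw⟩ : ∃ w, w = x - 21 * s ^ 2 := ⟨_, rfl⟩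
  have hw9 : 9900 * s ^ 5 ≤ w := by linarith
  have hwp : 0 < w := by linarith
  have hx' : x + 29 * s ^ 2 = w + 50 * s ^ 2 := by rw [hw]; ring
  have hxw : x ≤ 2 * w := by linarith
  rw [hx', ← hw, max_eq_left hwp.le]
  have e : (s + 1) * w ^ 3 - s * (w + 50 * s ^ 2) ^ 3 =
    w ^ 3 - 150 * s ^ 3 * w ^ 2 - 7500 * s ^ 5 * w - 125000 * s ^ 7 := by ring
  rw [e]
  have c1 : 9900 * s ^ 3 * w ^ 2 ≤ w ^ 3 := by
    have : 9900 * s ^ 3 * w ^ 2 ≤ w * w ^ 2 := mul_le_mul_of_nonneg_right (by linarith) (by positivity)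
    linarith [this, pow_succ w 2, mul_comm w (w ^ 2)]
  have w2 : 98000000 * s ^ 9 ≤ w ^ 2 := by
    have : (9900 * s ^ 5) ^ 2 ≤ w ^ 2 := pow_le_pow_left₀ (by positivity) hw9 2
    have : s ^ 9 ≤ s ^ 10 := pow_le_pow_right₀ hs (by norm_num)
    have : 0 < s ^ 9 := by positivity
    nlinarith
  have c2 : 98000000 * s ^ 9 * w ≤ w ^ 3 := by
    have : 98000000 * s ^ 9 * w ≤ w ^ 2 * w := mul_le_mul_of_nonneg_right w2 hwp.le
    linarith [this, pow_succ w 2]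
  have m59 : s ^ 5 * w ≤ s ^ 9 * w :=
    mul_le_mul_of_nonneg_right (pow_le_pow_right₀ hs (by norm_num)) hwp.le
  have m7 : s ^ 7 ≤ s ^ 9 * w := by
    have h1 : 1 ≤ w := by nlinarith [one_le_pow₀ hs (n := 5)]
    calc s ^ 7 ≤ s ^ 9 := pow_le_pow_right₀ hs (by norm_num)
      _ ≤ s ^ 9 * w := le_mul_of_one_le_right (by positivity) h1
  have p9 : 0 < s ^ 9 * w := by positivity
  have hx9 : s ^ 9 * x ≤ s ^ 9 * (2 * w) := mul_le_mul_of_nonneg_left hxw (by positivity)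
  nlinarith

/-- The key lower bound for the restricted problem. -/
lemma key_lower (s k : ℕ) (hs : 0 < s) (hk1 : s + 1 ≤ k) (hk2 : k ≤ 2 * s + 1) :
    ∃ Θ : ℚ, 0 < Θ ∧ ∀ n : ℕ,
      ((s : ℚ) + 1) * (max (n - 21 * (s : ℚ) ^ 2) 0) ^ 3 - s * (n + 29 * (s : ℚ) ^ 2) ^ 3 ≤
        Θ * coeff n ((geo s - 1 - geo k) * E3 s) := by
  have s1 : (1 : ℚ) ≤ s := by exact_mod_cast hs
  have K1 : (s : ℚ) + 1 ≤ k := by exact_mod_cast hk1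
  have K2 : (k : ℚ) ≤ 2 * s + 1 := by exact_mod_cast hk2
  obtain ⟨ab, hab⟩ : ∃ ab : ℚ, ab = ((2 * s + 2 : ℕ) : ℚ) * (((2 * s + 2 : ℕ) : ℚ) + 1) := ⟨_, rfl⟩
  have habp : 0 < ab := by rw [hab]; positivity
  have b2 := geo_two_bounds (2 * s + 2) (by omega)
  rw [← hab] at b2
  have nn2 : ∀ n, 0 ≤ coeff n (geo (2 * s + 2 + 1) * (geo (2 * s + 2) * 1)) := by
    apply geo_nonneg _ (by omega)
    apply geo_nonneg _ (by omega)
    intro n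
    rw [coeff_one]; split_ifs <;> norm_num
  have u1 := up1 (2 * s + 4) (by omega) _ ab ab habp habp.le (fun n => (b2 n).2)
  have l1 := low1 (2 * s + 4) (by omega) _ ab ab habp habp.le
    (fun n => max_le (b2 n).1 (mul_nonneg (nn2 n) habp.le))
  obtain ⟨K, hK⟩ : ∃ K : ℚ, K = ab * (2 * (2 * s + 4 : ℕ)) := ⟨_, rfl⟩
  have hKp : 0 < K := by rw [hK]; positivity
  rw [← hK] at u1 l1
  have u2 := up2 k (by omega) (E3 s) K _ hKp (by positivity) u1
  have l2 := low2 s hs (E3 s) K _ hKp habp.le l1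
  refine ⟨3 * K * s * (s + 1), by positivity, ?_⟩
  intro n
  have hG : geo s - 1 = X ^ s * geo s := by
    linear_combination geo_mul s hs
  rw [hG, sub_mul, map_sub, mul_assoc (X ^ s), coeff_X_pow_mul']
  have hC := geo_nonneg k (by omega) (E3 s) (E3_nonneg s) n
  have hU := u2 n
  have hA : (max ((n : ℚ) - s - ab) 0) ^ 3 ≤
      (if s ≤ n then coeff (n - s) (geo s * E3 s) else 0) * (K * (3 * s)) := by
    split_ifs with h
    · have := l2 (n - s)
      rw [Nat.cast_sub h] at this
      exact this
    · have : (n : ℚ) < s := by exact_mod_cast (not_le.mp h)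
      rw [max_eq_right (by linarith)]; simp
  generalize (if s ≤ n then coeff (n - s) (geo s * E3 s) else 0) = A at *
  generalize coeff n (geo k * E3 s) = C at *
  have s2 : (s : ℚ) ≤ s ^ 2 := by nlinarith
  have s3 : (1 : ℚ) ≤ s ^ 2 := by nlinarith
  have hab' : ab = 4 * (s : ℚ) ^ 2 + 10 * s + 6 := by rw [hab]; push_cast; ring
  have e1 : (max ((n : ℚ) - 21 * (s : ℚ) ^ 2) 0) ^ 3 ≤ A * (K * (3 * s)) := by
    refine le_trans (pow_le_pow_left₀ (le_max_right _ _) (max_le_max ?_ le_rfl) 3) hA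
    linarith
  have n0 : (0 : ℚ) ≤ n := Nat.cast_nonneg n
  have e2 : C * (K * (3 * (s + 1))) ≤ ((n : ℚ) + 29 * (s : ℚ) ^ 2) ^ 3 := by
    refine le_trans ?_ (hU.trans (pow_le_pow_left₀ (by positivity) ?_ 3))
    · exact mul_le_mul_of_nonneg_left (mul_le_mul_of_nonneg_left (by linarith) hKp.le) hC
    · push_cast
      linarith
  have f1 := mul_le_mul_of_nonneg_left e1 (show (0 : ℚ) ≤ s + 1 by positivity)
  have f2 := mul_le_mul_of_nonneg_left e2 (show (0 : ℚ) ≤ s by positivity)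
  nlinarith

lemma kappa_lower (s : ℕ) (hs : 0 < s) :
    (10000 * s ^ 5) * (10000 * s ^ 5) + 10000 * s ^ 5 ≤ kappa'' s := by
  unfold kappa''
  have ht : s ^ 2 + 1 ≤ s * (s + 1) := by nlinarith
  have hs4 : 1 ≤ s ^ 4 := Nat.one_le_pow _ _ hs
  have hF : 10000 * s ^ 4 ≤ Fs'' s := by
    unfold Fs''
    have h1 : 118 * s ^ 2 ≤ 120 * s * (s + 1) - 2 := by
      have : 120 * s * (s + 1) = 120 * (s * (s + 1)) := by ring
      omega
    have h2 : 177 * s ^ 2 ≤ 180 * s * (s + 1) - 3 := by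
      have : 180 * s * (s + 1) = 180 * (s * (s + 1)) := by ring
      omega
    have h3 := Nat.mul_le_mul h1 h2
    have : 118 * s ^ 2 * (177 * s ^ 2) = 20886 * s ^ 4 := by ring
    omega
  have hM : 299 * s ^ 2 ≤ 300 * s * (s + 1) - 1 := by
    have : 300 * s * (s + 1) = 300 * (s * (s + 1)) := by ring
    omega
  have hss : s ≤ s ^ 4 := Nat.le_self_pow (by norm_num) s
  have hsum : 5000 * s ^ 4 * (5000 * s ^ 4) ≤ ∑ i ∈ Finset.Icc (s + 1) (Fs'' s - 1), i := by
    calc 5000 * s ^ 4 * (5000 * s ^ 4)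
        = (Finset.Ico (5000 * s ^ 4) (10000 * s ^ 4)).card • (5000 * s ^ 4) := by
          rw [Nat.card_Ico, smul_eq_mul]; congr 1; omega
      _ ≤ ∑ i ∈ Finset.Ico (5000 * s ^ 4) (10000 * s ^ 4), i := by
          apply Finset.card_nsmul_le_sum
          intro i hi
          exact (Finset.mem_Ico.mp hi).1
      _ ≤ _ := by
          apply Finset.sum_le_sum_of_subset
          intro i hi
          rw [Finset.mem_Ico] at hi
          rw [Finset.mem_Icc]
          omega
  have h := Nat.mul_le_mul hM hsum
  have e : 299 * s ^ 2 * (5000 * s ^ 4 * (5000 * s ^ 4)) = 7475000000 * s ^ 10 := by ring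
  have e2 : (10000 * s ^ 5) * (10000 * s ^ 5) = 100000000 * s ^ 10 := by ring
  have : s ^ 5 ≤ s ^ 10 := Nat.pow_le_pow_right hs (by norm_num)
  omega

lemma main_pos (s k N : ℕ) (R : Finset ℕ) (hs : 0 < s) (hk1 : s + 1 ≤ k) (hk2 : k ≤ 2 * s + 1)
    (hN : kappa'' s ≤ N) :
    0 < coeff N ((geo s - 1 - geo k) * (E3 s * serP R)) := by
  obtain ⟨Θ, hΘ, h⟩ := key_lower s k hs hk1 hk2
  have s1 : (1 : ℚ) ≤ s := by exact_mod_cast hs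
  have h1 := conv_pos R (10000 * s ^ 5) N (by positivity) ((kappa_lower s hs).trans hN)
    (fun n => Θ * coeff n ((geo s - 1 - geo k) * E3 s)) (30000000 * (s : ℚ) ^ 9) (by positivity)
    (fun v => (poly1 s v s1 (Nat.cast_nonneg v)).trans (h v))
    (fun v hv => (poly2 s v s1 (by exact_mod_cast hv)).trans_le (h v))
  rw [← mul_assoc, coeff_mul]
  simp only [mul_assoc Θ] at h1
  rw [← Finset.mul_sum] at h1
  have h2 := pos_of_mul_pos_right h1 hΘ.le
  simpa [serP] using h2

lemma main_cnt (L s k N : ℕ) (A R : Finset ℕ) (hs : 0 < s) (hL : 3 * s + 3 ≤ L)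
    (hk1 : s + 1 ≤ k) (hk2 : k ≤ 2 * s + 1) (hN : kappa'' s ≤ N)
    (hA : A = insert (2 * s + 4) (insert (2 * s + 2 + 1) (insert (2 * s + 2) R)))
    (hR : R = (Finset.Icc (s + 1) (L + s)) \ {k, 2 * s + 2, 2 * s + 3, 2 * s + 4}) :
    cntP (insert k A) N + cntP A N < cntP (insert s A) N := by
  have e1 : serP A = E3 s * serP R := by
    rw [hA, serP_insert, serP_insert, serP_insert]
    · unfold E3; ring
    all_goals first | omega | (rw [hR]; simp)
  have e2 : serP (insert s A) = geo s * serP A := by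
    apply serP_insert _ _ hs
    rw [hA, hR]; simp; omega
  have e3 : serP (insert k A) = geo k * serP A := by
    apply serP_insert _ _ (by omega)
    rw [hA, hR]; simp; omega
  have h := main_pos s k N R hs hk1 hk2 hN
  rw [← e1, sub_mul, sub_mul, one_mul, ← e2, ← e3] at h
  simp only [map_sub, serP, coeff_mk] at h
  have : (cntP (insert k A) N : ℚ) + cntP A N < cntP (insert s A) N := by linarith
  exact_mod_cast this


theorem stmt_5 (L s k : ℕ) (hs : 0 < s) (hL : 3 * s + 3 ≤ L)
    (hk1 : s + 1 ≤ k) (hk2 : k ≤ 2 * s + 1)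
    (N : ℕ) (hN : kappa'' s ≤ N) :
    Nat.card {p : N.Partition // InI L s k p} > Nat.card {p : N.Partition // InD L s p} := by
  classical
  obtain ⟨R, hR⟩ : ∃ R : Finset ℕ,
    R = (Finset.Icc (s + 1) (L + s)) \ {k, 2 * s + 2, 2 * s + 3, 2 * s + 4} := ⟨_, rfl⟩
  obtain ⟨A, hA⟩ : ∃ A : Finset ℕ,
    A = insert (2 * s + 4) (insert (2 * s + 2 + 1) (insert (2 * s + 2) R)) := ⟨_, rfl⟩
  have hmem : ∀ x, x ∈ A ↔ (s + 1 ≤ x ∧ x ≤ L + s ∧ x ≠ k) := by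
    intro x
    rw [hA, hR]
    simp only [Finset.mem_insert, Finset.mem_sdiff, Finset.mem_Icc, Finset.mem_singleton]
    omega
  have hmain := main_cnt L s k N A R hs hL hk1 hk2 hN hA hR
  have hsA : s ∉ A := by rw [hmem]; omega
  rw [cnt_split A s N hsA] at hmain
  rw [Nat.card_eq_fintype_card, Nat.card_eq_fintype_card, Fintype.card_subtype,
    Fintype.card_subtype]
  have hD : (Finset.univ.filter (fun p : N.Partition => InD L s p)).card ≤
      cntP (insert k A) N := by
    unfold cntP
    apply Finset.card_le_card
    intro p hp
    rw [Finset.mem_filter] at hp ⊢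
    refine ⟨hp.1, fun x hx => ?_⟩
    have := hp.2.2 x hx
    rw [Finset.mem_insert, hmem]
    omega
  have hI : ((Finset.univ : Finset N.Partition).filter
      (fun p => (∀ x ∈ p.parts, x ∈ insert s A) ∧ s ∈ p.parts)).card ≤
      (Finset.univ.filter (fun p : N.Partition => InI L s k p)).card := by
    apply Finset.card_le_card
    intro p hp
    rw [Finset.mem_filter] at hp ⊢
    refine ⟨hp.1, hp.2.2, fun x hx => ?_, fun hk => ?_⟩
    · have := hp.2.1 x hx
      rw [Finset.mem_insert, hmem] at this
      omega
    · have := hp.2.1 k hk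
      rw [Finset.mem_insert, hmem] at this
      omega
  omega
end

section
/- Let L, s and k be positive integers with L ≥ 3 and s+1 ≤ k ≤ L+s. Then for every integer N ≥ γ(L,s), the number of partitions of N lying in I_{L,s,k} is strictly greater than the number of partitions of N lying in D_{L,s}. -/
section auxiliary
open Finset

theorem aux_T_step (L m : ℕ) (hL : 1 ≤ L) :
    L.multichoose (m+1) * (m+1) = L.multichoose m * (m + L) := by
  rw [Nat.multichoose_eq, Nat.multichoose_eq]
  obtain ⟨l, rfl⟩ : ∃ l, L = l + 1 := ⟨L - 1, by omega⟩
  have h := Nat.add_one_mul_choose_eq (l + m) m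
  have e1 : l + 1 + (m+1) - 1 = l+m+1 := by omega
  have e2 : l + 1 + m - 1 = l + m := by omega
  rw [e1, e2]
  rw [← h]; ring

theorem aux_T_mono (L : ℕ) (hL : 1 ≤ L) : Monotone (L.multichoose) := by
  refine monotone_nat_of_le_succ fun m => ?_
  have h := aux_T_step L m hL
  by_contra hc
  push Not at hc
  have : L.multichoose (m+1) * (m+1) < L.multichoose m * (m+L) :=
    Nat.mul_lt_mul_of_lt_of_le hc (by omega) (by omega)
  omega

theorem aux_T_pos (L m : ℕ) (hL : 1 ≤ L) : 0 < L.multichoose m := by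
  rw [Nat.multichoose_eq]; exact Nat.choose_pos (by omega)

/-- the decrease over `c` steps -/
theorem aux_T_dec (L n c : ℕ) (hL : 1 ≤ L) :
    (L.multichoose (n + c) : ℤ) * n ≤ L.multichoose n * n + c * L * L.multichoose (n+c) := by
  induction c with
  | zero => simp
  | succ c ih =>
    have h := aux_T_step L (n+c) hL
    have hm : L.multichoose (n+c) ≤ L.multichoose (n+c+1) := aux_T_mono L hL (by omega)
    rw [← add_assoc]
    generalize L.multichoose (n+c+1) = x at *
    generalize L.multichoose (n+c) = y at *
    generalize L.multichoose n = z at *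
    zify at h hm
    push_cast
    have h0 : (0:ℤ) ≤ (c:ℤ) * (x - y) := mul_nonneg (by positivity) (by linarith)
    have h1 : (0:ℤ) ≤ (c:ℤ) * L * (x - y) := mul_nonneg (by positivity) (by linarith)
    have h2 : (0:ℤ) ≤ (L:ℤ) * (x - y) := mul_nonneg (by positivity) (by linarith)
    nlinarith

theorem aux_T_final (L n c s k : ℕ) (hL : 1 ≤ L) (hk : s + 1 ≤ k) (hn : k * (c * L) < n) :
    s * L.multichoose (n + c) < k * L.multichoose n := by
  have h := aux_T_dec L n c hL
  have hp := aux_T_pos L (n+c) hL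
  generalize L.multichoose (n+c) = x at *
  generalize L.multichoose n = z at *
  zify at *
  by_contra hc
  push Not at hc
  have h1 : (k:ℤ) * (x * n) ≤ k * (z * n + c * L * x) := mul_le_mul_of_nonneg_left h (by positivity)
  have h2 : (k:ℤ) * z * n ≤ s * x * n := mul_le_mul_of_nonneg_right hc (by positivity)
  have h3 : (k * (c * L)) * (x:ℤ) < n * x := mul_lt_mul_of_pos_right hn hp
  have h4 : (0:ℤ) ≤ (k - (s+1)) * (x * n) := mul_nonneg (by linarith) (by positivity)
  nlinarith

theorem aux_card_pi {ι : Type*} [Fintype ι] [DecidableEq ι] (m : ℕ) :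
    #(piAntidiag (univ : Finset ι) m) = (Fintype.card ι).multichoose m := by
  rw [← card_univ, ← card_finsuppAntidiag_nat_eq_multichoose, finsuppAntidiag, card_map, card_attach]

/-- residue vectors -/
def auxR {ι : Type*} [Fintype ι] [DecidableEq ι] (a w : ι → ℕ) (M c : ℕ) : Finset (ι → ℕ) :=
  (Fintype.piFinset fun i => range (w i)).filter fun r => (∑ i, a i * r i) % M = c % M

theorem auxR_mono {ι : Type*} [Fintype ι] [DecidableEq ι] (a w : ι → ℕ) (M : ℕ) (hM : 0 < M)
    (hw : ∀ i, a i * w i = M) (i j : ι) (hij : a j = a i + 1) (c : ℕ) :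
    #(auxR a w M c) ≤ #(auxR a w M (c+1)) := by
  have hwpos : ∀ i, 0 < w i := fun i => Nat.pos_of_mul_pos_left (by rw [hw i]; exact hM)
  have hne : i ≠ j := by rintro rfl; omega
  let u : ι → ℕ := fun l => if l = j then 1 else if l = i then M - 1 else 0
  have hu : ∑ l, a l * u l = a i * M + 1 := by
    have : ∀ l, a l * u l = (if l = j then a j else 0) + (if l = i then a i * (M-1) else 0) := by
      intro l
      by_cases h1 : l = j
      · subst h1; simp [u, hne.symm]
      · by_cases h2 : l = i
        · subst h2; simp [u, hne]
        · simp [u, h1, h2]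
    simp only [this, sum_add_distrib, sum_ite_eq', mem_univ, if_true]
    obtain ⟨m, rfl⟩ : ∃ m, M = m + 1 := ⟨M - 1, by omega⟩
    rw [hij]; simp; ring
  refine card_le_card_of_injOn (fun r l => (r l + u l) % w l) ?_ ?_
  · intro r hr
    simp only [auxR, coe_filter, Fintype.mem_piFinset, mem_range, Set.mem_ofPred_eq] at hr ⊢
    refine ⟨fun l => Nat.mod_lt _ (hwpos l), ?_⟩
    change (∑ l, a l * ((r l + u l) % w l)) ≡ c + 1 [MOD M]
    have h1 : (∑ l, a l * ((r l + u l) % w l)) ≡ ∑ l, a l * (r l + u l) [MOD M] := by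
      refine Nat.ModEq.sum fun l _ => ?_
      have := (Nat.mod_modEq (r l + u l) (w l)).mul_left' (a l)
      rwa [hw l] at this
    refine h1.trans ?_
    simp only [mul_add, sum_add_distrib]
    rw [hu]
    have h2 : (∑ l, a l * r l) ≡ c [MOD M] := hr.2
    refine h2.add ?_
    simp [Nat.ModEq]
  · intro r hr q hq h
    simp only [auxR, coe_filter, Fintype.mem_piFinset, mem_range, Set.mem_ofPred_eq] at hr hq
    funext l
    have hl := congrFun h l
    have : r l ≡ q l [MOD w l] := Nat.ModEq.add_right_cancel' (u l) hl
    exact Nat.ModEq.eq_of_lt_of_lt this (hr.1 l) (hq.1 l)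

theorem auxR_card {ι : Type*} [Fintype ι] [DecidableEq ι] (a w : ι → ℕ) (M : ℕ) (hM : 0 < M)
    (hw : ∀ i, a i * w i = M) (i j : ι) (hij : a j = a i + 1) (c : ℕ) :
    #(auxR a w M c) * M = ∏ i, w i := by
  have hmono : Monotone fun c => #(auxR a w M c) :=
    monotone_nat_of_le_succ fun c => auxR_mono a w M hM hw i j hij c
  have hper : ∀ c, #(auxR a w M c) = #(auxR a w M (c % M)) := fun c => by simp [auxR]
  have h0 : ∀ c, #(auxR a w M c) = #(auxR a w M 0) := by
    intro c
    apply le_antisymm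
    · refine (hmono (show c ≤ M * c by nlinarith)).trans ?_
      change #(auxR a w M (M*c)) ≤ _
      rw [hper (M*c)]; simp
    · exact hmono (Nat.zero_le c)
  have h := card_eq_sum_card_fiberwise (s := Fintype.piFinset fun i => range (w i))
    (t := range M) (f := fun r => (∑ i, a i * r i) % M)
    (fun r _ => by simpa using Nat.mod_lt _ hM)
  rw [Fintype.card_piFinset] at h
  simp only [card_range] at h
  rw [h, sum_congr rfl (g := fun _ => #(auxR a w M c))]
  · simp [mul_comm]
  · intro b hb
    rw [h0 c, ← h0 b]
    simp only [auxR, Nat.mod_eq_of_lt (mem_range.1 hb)]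

/-- solution sets -/
def auxX {ι : Type*} [Fintype ι] [DecidableEq ι] (a : ι → ℕ) (N : ℕ) : Finset (ι → ℕ) :=
  (Fintype.piFinset fun _ => range (N+1)).filter fun x => ∑ i, a i * x i = N

theorem aux_mem_X {ι : Type*} [Fintype ι] [DecidableEq ι] (a : ι → ℕ) (ha : ∀ i, 0 < a i) (N : ℕ)
    (x : ι → ℕ) : x ∈ auxX a N ↔ ∑ i, a i * x i = N := by
  simp only [auxX, mem_filter, Fintype.mem_piFinset, mem_range, and_iff_right_iff_imp]
  intro h i
  have h1 : a i * x i ≤ ∑ i, a i * x i :=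
    single_le_sum (f := fun i => a i * x i) (fun _ _ => Nat.zero_le _) (mem_univ i)
  have h2 := Nat.le_mul_of_pos_left (x i) (ha i)
  omega

theorem aux_X_eq {ι : Type*} [Fintype ι] [DecidableEq ι] (a w : ι → ℕ) (M : ℕ) (hM : 0 < M)
    (hw : ∀ i, a i * w i = M) (N : ℕ) :
    #(auxX a N) = ∑ r ∈ auxR a w M N, #{x ∈ auxX a N | (fun i => x i % w i) = r} := by
  have hwpos : ∀ i, 0 < w i := fun i => Nat.pos_of_mul_pos_left (by rw [hw i]; exact hM)
  have ha : ∀ i, 0 < a i := fun i => Nat.pos_of_mul_pos_right (by rw [hw i]; exact hM)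
  refine card_eq_sum_card_fiberwise ?_
  intro x hx
  rw [mem_coe, aux_mem_X a ha] at hx
  simp only [auxR, coe_filter, Fintype.mem_piFinset, mem_range, Set.mem_ofPred_eq]
  refine ⟨fun l => Nat.mod_lt _ (hwpos l), ?_⟩
  change (∑ l, a l * (x l % w l)) ≡ N [MOD M]
  rw [← hx]
  refine Nat.ModEq.sum fun l _ => ?_
  have := (Nat.mod_modEq (x l) (w l)).mul_left' (a l)
  rwa [hw l] at this

theorem aux_X_upper {ι : Type*} [Fintype ι] [DecidableEq ι] [Nonempty ι] (a w : ι → ℕ) (M : ℕ)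
    (hM : 0 < M) (hw : ∀ i, a i * w i = M) (N : ℕ) :
    #(auxX a N) ≤ #(auxR a w M N) * (Fintype.card ι).multichoose (N / M) := by
  have ha : ∀ i, 0 < a i := fun i => Nat.pos_of_mul_pos_right (by rw [hw i]; exact hM)
  rw [aux_X_eq a w M hM hw N]
  rw [← smul_eq_mul]
  refine sum_le_card_nsmul _ _ _ fun r hr => ?_
  refine le_trans ?_ (aux_T_mono _ Fintype.card_pos
    (Nat.div_le_div_right (c := M) (Nat.sub_le N (∑ i, a i * r i))))
  rw [← aux_card_pi]
  refine card_le_card_of_injOn (fun x i => x i / w i) ?_ ?_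
  · intro x hx
    simp only [coe_filter, Set.mem_ofPred_eq, aux_mem_X a ha] at hx
    obtain ⟨hx, rfl⟩ := hx
    simp only [mem_coe, mem_piAntidiag, mem_univ, implies_true, and_true]
    symm
    apply Nat.div_eq_of_eq_mul_right hM
    have : N = ∑ i, a i * (x i % w i) + M * ∑ i, x i / w i := by
      rw [mul_sum, ← sum_add_distrib, ← hx]
      refine sum_congr rfl fun i _ => ?_
      rw [← hw i, mul_assoc, ← mul_add, Nat.mod_add_div]
    omega
  · intro x hx y hy h
    simp only [coe_filter, Set.mem_ofPred_eq] at hx hy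
    funext i
    have h1 := congrFun h i
    have h2 := congrFun (hx.2.trans hy.2.symm) i
    simp only at h1 h2
    rw [← Nat.mod_add_div (x i) (w i), ← Nat.mod_add_div (y i) (w i), h1, h2]

theorem aux_X_lower {ι : Type*} [Fintype ι] [DecidableEq ι] [Nonempty ι] (a w : ι → ℕ) (M : ℕ)
    (hM : 0 < M) (hw : ∀ i, a i * w i = M) (N n : ℕ) (hN : (n + Fintype.card ι) * M ≤ N) :
    #(auxR a w M N) * (Fintype.card ι).multichoose n ≤ #(auxX a N) := by
  have hwpos : ∀ i, 0 < w i := fun i => Nat.pos_of_mul_pos_left (by rw [hw i]; exact hM)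
  have ha : ∀ i, 0 < a i := fun i => Nat.pos_of_mul_pos_right (by rw [hw i]; exact hM)
  rw [aux_X_eq a w M hM hw N]
  rw [← smul_eq_mul]
  refine card_nsmul_le_sum _ _ _ fun r hr => ?_
  simp only [auxR, mem_filter, Fintype.mem_piFinset, mem_range] at hr
  obtain ⟨hr, hrN⟩ := hr
  have hS : ∑ i, a i * r i ≤ Fintype.card ι * M := by
    have := sum_le_card_nsmul (univ : Finset ι) (fun i => a i * r i) M (fun i _ => by
      rw [← hw i]; exact Nat.mul_le_mul_left _ (hr i).le)
    simpa using this
  have hle : ∑ i, a i * r i + n * M ≤ N := by rw [add_mul] at hN; omega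
  have hn : n ≤ (N - ∑ i, a i * r i) / M := by
    rw [Nat.le_div_iff_mul_le hM]; omega
  refine le_trans (aux_T_mono _ Fintype.card_pos hn) ?_
  rw [← aux_card_pi]
  refine card_le_card_of_injOn (fun y i => r i + w i * y i) ?_ ?_
  · intro y hy
    simp only [mem_coe, mem_piAntidiag, mem_univ, implies_true, and_true] at hy
    simp only [coe_filter, Set.mem_ofPred_eq, aux_mem_X a ha]
    refine ⟨?_, ?_⟩
    · have h1 : ∑ i, a i * (r i + w i * y i) = ∑ i, a i * r i + M * ∑ i, y i := by
        rw [mul_sum, ← sum_add_distrib]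
        refine sum_congr rfl fun i _ => ?_
        rw [← hw i]; ring
      have hd : M ∣ N - ∑ i, a i * r i := (Nat.modEq_iff_dvd' (by omega)).1 hrN
      rw [h1, hy, Nat.mul_div_cancel' hd]; omega
    · funext i
      rw [Nat.add_mul_mod_self_left, Nat.mod_eq_of_lt (hr i)]
  · intro x hx y hy h
    funext i
    have := congrFun h i
    simp only [add_right_inj] at this
    exact Nat.eq_of_mul_eq_mul_left (hwpos i) this

theorem aux_prod_rel (S : Finset ℕ) (M N : ℕ) (hM : 0 < M) (hdvd : ∀ i ∈ S, i ∣ M)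
    (b : ℕ) (hb : b ∈ S) (hb1 : b + 1 ∈ S) :
    #(auxR (fun i : S => (i : ℕ)) (fun i : S => M / (i : ℕ)) M N) * M * ∏ i ∈ S, i = M ^ #S := by
  have hw : ∀ i : S, (i : ℕ) * (M / (i : ℕ)) = M := fun i => Nat.mul_div_cancel' (hdvd i i.2)
  rw [auxR_card (fun i : S => (i : ℕ)) (fun i : S => M / (i : ℕ)) M hM hw ⟨b, hb⟩ ⟨b+1, hb1⟩ rfl N]
  rw [← prod_coe_sort S (fun i => i), ← prod_mul_distrib]
  rw [prod_congr rfl (g := fun _ => M) (fun i _ => by rw [mul_comm]; exact hw i)]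
  simp

theorem aux_part_le (L s N : ℕ) :
    Nat.card {p : N.Partition // InD L s p} ≤
      #(auxX (fun i : (Ico (s+1) (s+1+L) : Finset ℕ) => (i : ℕ)) N) := by
  have ha : ∀ i : (Ico (s+1) (s+1+L) : Finset ℕ), 0 < (i : ℕ) := fun i => by
    have := mem_Ico.1 i.2; omega
  rw [← Nat.card_eq_finsetCard]
  refine Nat.card_le_card_of_injective
    (fun p => ⟨fun i => p.1.parts.count (i : ℕ), ?_⟩) ?_
  · rw [aux_mem_X _ ha]
    obtain ⟨p, hp⟩ := p
    rw [sum_coe_sort (Ico (s+1) (s+1+L)) (fun i => i * p.parts.count i)]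
    conv_rhs => rw [← p.parts_sum, Finset.sum_multiset_count_of_subset p.parts (Ico (s+1) (s+1+L))
      (fun x hx => by
        have := hp.2 x (Multiset.mem_toFinset.1 hx)
        rw [mem_Ico]; omega)]
    simp [mul_comm]
  · intro p q h
    have hval := congrArg Subtype.val h
    apply Subtype.ext
    apply Nat.Partition.ext
    ext x
    by_cases hx : x ∈ Ico (s+1) (s+1+L)
    · exact congrFun hval ⟨x, hx⟩
    · rw [Multiset.count_eq_zero_of_notMem, Multiset.count_eq_zero_of_notMem]
      · intro hq; have := q.2.2 x hq; exact hx (by rw [mem_Ico]; omega)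
      · intro hq; have := p.2.2 x hq; exact hx (by rw [mem_Ico]; omega)

theorem aux_part_ge (L s k N : ℕ) (S : Finset ℕ) (hS : ∀ i ∈ S, s ≤ i ∧ i ≤ L + s ∧ i ≠ k)
    (hs : 0 < s) (hk : s ≠ k) (hN : s ≤ N) :
    #(auxX (fun i : S => (i : ℕ)) (N - s)) ≤ Nat.card {p : N.Partition // InI L s k p} := by
  have ha : ∀ i : S, 0 < (i : ℕ) := fun i => by
    have := hS i i.2; omega
  have hmem : ∀ (x : S → ℕ) (y : ℕ), y ∈ s ::ₘ (∑ i : S, Multiset.replicate (x i) (i : ℕ)) →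
      y = s ∨ y ∈ S := by
    intro x y hy
    rw [Multiset.mem_cons, Multiset.mem_sum] at hy
    rcases hy with hy | ⟨i, -, hy⟩
    · exact Or.inl hy
    · rw [Multiset.eq_of_mem_replicate hy]; exact Or.inr i.2
  rw [← Nat.card_eq_finsetCard]
  refine Nat.card_le_card_of_injective
    (fun x => ⟨⟨s ::ₘ (∑ i : S, Multiset.replicate (x.1 i) (i : ℕ)), ?_, ?_⟩, ?_⟩) ?_
  · intro y hy
    rcases hmem _ _ hy with rfl | h
    · exact hs
    · exact ha ⟨y, h⟩
  · have hx := (aux_mem_X _ ha _ _).1 x.2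
    rw [Multiset.sum_cons, Multiset.sum_sum]
    simp only [Multiset.sum_replicate, smul_eq_mul]
    simp only [mul_comm] at hx ⊢
    omega
  · refine ⟨Multiset.mem_cons_self _ _, ?_, ?_⟩
    · intro y hy
      rcases hmem _ _ hy with rfl | h
      · omega
      · have := hS y h; omega
    · intro hy
      rcases hmem _ _ hy with h | h
      · exact hk h.symm
      · exact (hS k h).2.2 rfl
  · intro x y h
    have h1 := congrArg (fun p => p.1.parts) h
    simp only [Multiset.cons_inj_right] at h1
    apply Subtype.ext
    funext j
    have h2 := congrArg (Multiset.count (j : ℕ)) h1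
    simpa [Multiset.count_sum', Multiset.count_replicate, Subtype.coe_inj] using h2

theorem aux_bound (L s k N : ℕ) (hs : 0 < s) (hL : 3 ≤ L) (hk2 : k ≤ L + s)
    (hN : gammaLS L s ≤ N) : L + 1 + k * ((L+1) * L) < N / (s * prodP L s) := by
  have hPpos : 0 < prodP L s := prod_pos fun i _ => by omega
  have hdvd : ∀ i < L, s + 1 + i ∣ prodP L s := fun i hi =>
    dvd_prod_of_mem (fun i => s + 1 + i) (mem_range.2 hi)
  have hLs : L + s ≤ prodP L s := by
    have := Nat.le_of_dvd hPpos (hdvd (L-1) (by omega)); omega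
  unfold gammaLS at hN
  have hsum : 1 ≤ ∑ i ∈ range L, (s + 1 + i) := by
    have := single_le_sum (f := fun i => s + 1 + i) (fun _ _ => Nat.zero_le _)
      (mem_range.2 (show 0 < L by omega))
    omega
  generalize prodP L s = P at *
  have h1 : P ^ 6 ≤ N := by
    refine le_trans ?_ hN
    refine le_trans ?_ (Nat.le_mul_of_pos_left _ hsum)
    refine le_trans ?_ (Nat.le_add_right _ _)
    refine Nat.pow_le_pow_right hPpos ?_
    have h16 : 16 ≤ P ^ 2 := by nlinarith
    have : 15 * 3 ≤ (P^2 - 1) * L := Nat.mul_le_mul (by omega) hL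
    omega
  have h2 : P ^ 4 ≤ N / (s * P) := by
    rw [Nat.le_div_iff_mul_le (by positivity)]
    calc P ^ 4 * (s * P) ≤ P ^ 4 * (P * P) := by gcongr; omega
      _ = P ^ 6 := by ring
      _ ≤ N := h1
  refine lt_of_lt_of_le ?_ h2
  have h3 : k * ((L+1)*L) ≤ P * (P * P) := by gcongr <;> omega
  have h4 : P * (P * P) * 4 ≤ P * (P * P) * P := Nat.mul_le_mul_left _ (by omega)
  have h5 : P ^ 4 = P * (P * P) * P := by ring
  have h6 : P * 1 ≤ P * (P * P) := Nat.mul_le_mul_left _ (Nat.mul_pos hPpos hPpos)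
  omega

end auxiliary

open Finset in
theorem stmt_6 (L s k : ℕ) (hs : 0 < s) (hL : 3 ≤ L) (hk1 : s + 1 ≤ k) (hk2 : k ≤ L + s)
    (N : ℕ) (hN : gammaLS L s ≤ N) :
    Nat.card {p : N.Partition // InI L s k p} > Nat.card {p : N.Partition // InD L s p} := by
  have hPpos : 0 < prodP L s := prod_pos fun i _ => by omega
  have hbound := aux_bound L s k N hs hL hk2 hN
  have hP : prodP L s = ∏ i ∈ Ico (s+1) (s+1+L), i := by
    rw [prod_Ico_eq_prod_range]; simp [prodP]
  obtain ⟨A, hA⟩ : ∃ A, A = Ico (s+1) (s+1+L) := ⟨_, rfl⟩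
  obtain ⟨B, hB⟩ : ∃ B, B = insert s (A.erase k) := ⟨_, rfl⟩
  obtain ⟨M, hMdef⟩ : ∃ M, M = s * prodP L s := ⟨_, rfl⟩
  have hM : 0 < M := by rw [hMdef]; positivity
  have hkA : k ∈ A := by rw [hA, mem_Ico]; omega
  have hsA : s ∉ A.erase k := by rw [hA]; simp
  have hcA : #A = L := by rw [hA]; simp
  have hcB : #B = L := by
    rw [hB, card_insert_of_notMem hsA, card_erase_of_mem hkA, hcA]; omega
  have hPA : ∏ i ∈ A, i = prodP L s := by rw [hP, hA]
  have hPB : (∏ i ∈ B, i) * k = s * ∏ i ∈ A, i := by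
    rw [hB, prod_insert hsA, mul_assoc, prod_erase_mul A (fun i => i) hkA]
  have hAd : ∀ i ∈ A, i ∣ M := fun i hi => by
    rw [hMdef, ← hPA]; exact (dvd_prod_of_mem (fun i => i) hi).mul_left _
  have hBd : ∀ i ∈ B, i ∣ M := fun i hi => by
    rw [hB, mem_insert] at hi
    rcases hi with rfl | hi
    · rw [hMdef]; exact dvd_mul_right _ _
    · exact hAd i (mem_of_mem_erase hi)
  have hsM : s ≤ M := by rw [hMdef]; exact Nat.le_mul_of_pos_right _ hPpos
  have hrA := aux_prod_rel A M N hM hAd (s+1) (by rw [hA, mem_Ico]; omega)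
    (by rw [hA, mem_Ico]; omega)
  have hrB : #(auxR (fun i : B => (i : ℕ)) (fun i : B => M / (i : ℕ)) M (N - s)) * M * ∏ i ∈ B, i
      = M ^ #B := by
    by_cases h : k = s + 1
    · exact aux_prod_rel B M (N-s) hM hBd (s+2) (by simp [hB, hA]; omega) (by simp [hB, hA]; omega)
    · exact aux_prod_rel B M (N-s) hM hBd s (by simp [hB]) (by simp [hB, hA]; omega)
  have hneA : Nonempty A := ⟨⟨k, hkA⟩⟩
  have hneB : Nonempty B := ⟨⟨s, by simp [hB]⟩⟩
  have hup := aux_X_upper (fun i : A => (i : ℕ)) (fun i : A => M / (i : ℕ)) M hM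
    (fun i => Nat.mul_div_cancel' (hAd i i.2)) N
  rw [← hMdef] at hbound
  obtain ⟨n, hn⟩ : ∃ n, N / M = n + (L + 1) := ⟨N / M - (L + 1), by omega⟩
  have hNM : N / M * M ≤ N := Nat.div_mul_le_self N M
  have hlow := aux_X_lower (fun i : B => (i : ℕ)) (fun i : B => M / (i : ℕ)) M hM
    (fun i => Nat.mul_div_cancel' (hBd i i.2)) (N - s) n (by
      rw [Fintype.card_coe, hcB]
      rw [hn, ← add_assoc, add_mul, one_mul] at hNM
      omega)
  rw [Fintype.card_coe] at hup hlow
  rw [hcA] at hup hrA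
  rw [hcB] at hlow hrB
  rw [hn] at hup
  have hT := aux_T_final L n (L+1) s k (by omega) hk1 (by omega)
  have hsN : s ≤ N := by
    have : 1 * M ≤ N / M * M := Nat.mul_le_mul_right _ (by omega)
    omega
  have hI := aux_part_ge L s k N B (by
    intro i hi
    rw [hB, hA] at hi
    simp only [mem_insert, mem_erase, mem_Ico] at hi
    omega) hs (by omega) hsN
  have hD := aux_part_le L s N
  rw [← hA] at hD
  refine lt_of_le_of_lt (hD.trans hup) (lt_of_lt_of_le ?_ (hlow.trans hI))
  generalize #(auxR (fun i : A => (i : ℕ)) (fun i : A => M / (i : ℕ)) M N) = fA at *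
  generalize #(auxR (fun i : B => (i : ℕ)) (fun i : B => M / (i : ℕ)) M (N - s)) = fB at *
  have hQ : 0 < ∏ i ∈ A, i := by rw [hPA]; exact hPpos
  generalize ∏ i ∈ A, i = QA at *
  generalize ∏ i ∈ B, i = QB at *
  have hfB : 0 < fB := by
    rcases Nat.eq_zero_or_pos fB with h | h
    · rw [h] at hrB; have : 0 < M ^ L := by positivity
      omega
    · exact h
  have hrel : fA * k = fB * s := by
    have h1 : (M * QA) * (fA * k) = (M * QA) * (fB * s) := by
      calc (M * QA) * (fA * k) = (fA * M * QA) * k := by ring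
        _ = (fB * M * QB) * k := by rw [hrA, hrB]
        _ = fB * M * (QB * k) := by ring
        _ = (M * QA) * (fB * s) := by rw [hPB]; ring
    exact Nat.eq_of_mul_eq_mul_left (Nat.mul_pos hM hQ) h1
  have hkpos : 0 < k := by omega
  apply lt_of_mul_lt_mul_left (a := k) _ (Nat.zero_le _)
  calc k * (fA * L.multichoose (n + (L+1))) = (fA * k) * L.multichoose (n + (L+1)) := by ring
    _ = fB * (s * L.multichoose (n + (L+1))) := by rw [hrel]; ring
    _ < fB * (k * L.multichoose n) := Nat.mul_lt_mul_of_pos_left hT hfB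
    _ = k * (fB * L.multichoose n) := by ring
end

section
/- Let L ≥ 3 and s be positive integers. Then for every integer N ≥ Γ(s), the number of partitions of N lying in C_{L,s} is at least the number of partitions of N lying in D_{L,s}. -/
open Classical in
/-- multisets of positive elements of `S` with sum `n` -/
noncomputable def Mf (S : Finset ℕ) (n : ℕ) : Finset (Multiset ℕ) :=
  ((Finset.univ : Finset n.Partition).image (fun p => p.parts)).filter (fun m => ∀ x ∈ m, x ∈ S)

lemma mem_Mf {S : Finset ℕ} {n : ℕ} {m : Multiset ℕ} :
    m ∈ Mf S n ↔ (∀ x ∈ m, x ∈ S) ∧ (∀ x ∈ m, 0 < x) ∧ m.sum = n := by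
  classical
  unfold Mf
  simp only [Finset.mem_filter, Finset.mem_image, Finset.mem_univ, true_and]
  constructor
  · rintro ⟨⟨p, rfl⟩, h⟩
    exact ⟨h, fun x hx => p.parts_pos hx, p.parts_sum⟩
  · rintro ⟨h, h1, h2⟩
    exact ⟨⟨⟨m, fun {i} hi => h1 i hi, h2⟩, rfl⟩, h⟩

noncomputable def cc (S : Finset ℕ) (n : ℕ) : ℕ := (Mf S n).card

lemma cc_union (S T : Finset ℕ) (hST : Disjoint S T) (n : ℕ) :
    cc (S ∪ T) n = ∑ j ∈ Finset.range (n + 1), cc S j * cc T (n - j) := by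
  classical
  have hd : ((Finset.range (n+1) : Finset ℕ) : Set ℕ).PairwiseDisjoint
      (fun j => Mf S j ×ˢ Mf T (n - j)) := by
    intro a _ b _ hab
    rw [Function.onFun, Finset.disjoint_left]
    rintro ⟨u, v⟩ h1 h2
    rw [Finset.mem_product, mem_Mf, mem_Mf] at h1 h2
    exact hab (h1.1.2.2.symm.trans h2.1.2.2)
  have : ∑ j ∈ Finset.range (n + 1), cc S j * cc T (n - j)
      = ((Finset.range (n+1)).biUnion (fun j => Mf S j ×ˢ Mf T (n - j))).card := by
    rw [Finset.card_biUnion hd]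
    simp [cc, Finset.card_product]
  rw [this]
  symm
  have fS : ∀ u v : Multiset ℕ, (∀ x ∈ u, x ∈ S) → (∀ x ∈ v, x ∈ T) →
      (u + v).filter (· ∈ S) = u := by
    intro u v hu hv
    rw [Multiset.filter_add, Multiset.filter_eq_self.2 hu, Multiset.filter_eq_nil.2, add_zero]
    intro x hx hxS
    exact Finset.disjoint_left.1 hST hxS (hv x hx)
  apply Finset.card_bij (fun p _ => p.1 + p.2)
  · rintro ⟨u, v⟩ h
    simp only [Finset.mem_biUnion, Finset.mem_product, mem_Mf, Finset.mem_range] at h ⊢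
    obtain ⟨j, hj, ⟨a1, a2, a3⟩, b1, b2, b3⟩ := h
    refine ⟨?_, ?_, ?_⟩
    · intro x hx
      rcases Multiset.mem_add.1 hx with hx | hx
      · exact Finset.mem_union_left _ (a1 x hx)
      · exact Finset.mem_union_right _ (b1 x hx)
    · intro x hx
      rcases Multiset.mem_add.1 hx with hx | hx
      · exact a2 x hx
      · exact b2 x hx
    · rw [Multiset.sum_add, a3, b3]; omega
  · rintro ⟨u, v⟩ h ⟨u', v'⟩ h' he
    simp only [Finset.mem_biUnion, Finset.mem_product, mem_Mf, Finset.mem_range] at h h' he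
    obtain ⟨j, hj, ⟨a1, a2, a3⟩, b1, b2, b3⟩ := h
    obtain ⟨j', hj', ⟨a1', a2', a3'⟩, b1', b2', b3'⟩ := h'
    have e1 : u = u' := by rw [← fS u v a1 b1, he, fS u' v' a1' b1']
    subst e1
    have e2 : v = v' := add_left_cancel he
    rw [e2]
  · intro m hm
    obtain ⟨h1, h2, h3⟩ := mem_Mf.1 hm
    refine ⟨(m.filter (· ∈ S), m.filter (¬ · ∈ S)), ?_, Multiset.filter_add_not _ _⟩
    have hs : (m.filter (· ∈ S)).sum + (m.filter (¬ · ∈ S)).sum = n := by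
      rw [← Multiset.sum_add, Multiset.filter_add_not, h3]
    simp only [Finset.mem_biUnion, Finset.mem_product, mem_Mf, Finset.mem_range]
    refine ⟨(m.filter (· ∈ S)).sum, by omega, ⟨?_, ?_, rfl⟩, ?_, ?_, by omega⟩
    · intro x hx; exact (Multiset.mem_filter.1 hx).2
    · intro x hx; exact h2 x (Multiset.mem_filter.1 hx).1
    · intro x hx
      have := Multiset.mem_filter.1 hx
      exact (Finset.mem_union.1 (h1 x this.1)).resolve_left this.2
    · intro x hx; exact h2 x (Multiset.mem_filter.1 hx).1

lemma cc_insert (d : ℕ) (hd : 0 < d) (T : Finset ℕ) (hT : d ∉ T) (n : ℕ) :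
    cc (insert d T) n = ∑ j ∈ Finset.range (n / d + 1), cc T (n - d * j) := by
  classical
  have hc0 : ∀ i u, u ∈ Mf T i → u.count d = 0 := by
    intro i u hu
    rw [Multiset.count_eq_zero]
    exact fun h => hT ((mem_Mf.1 hu).1 d h)
  have hdj : ((Finset.range (n / d + 1) : Finset ℕ) : Set ℕ).PairwiseDisjoint
      (fun j => (Mf T (n - d * j)).image (fun u => u + Multiset.replicate j d)) := by
    intro a _ b _ hab
    rw [Function.onFun, Finset.disjoint_left]
    intro w h1 h2
    simp only [Finset.mem_image] at h1 h2
    obtain ⟨u, hu, rfl⟩ := h1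
    obtain ⟨v, hv, he⟩ := h2
    have := congrArg (Multiset.count d) he
    simp [hc0 _ _ hu, hc0 _ _ hv] at this
    exact hab this.symm
  have : ∑ j ∈ Finset.range (n / d + 1), cc T (n - d * j)
      = ((Finset.range (n/d+1)).biUnion
        (fun j => (Mf T (n - d * j)).image (fun u => u + Multiset.replicate j d))).card := by
    rw [Finset.card_biUnion hdj]
    refine Finset.sum_congr rfl fun j _ => ?_
    rw [Finset.card_image_of_injective _ (add_left_injective _)]
    rfl
  rw [this, cc]
  congr 1
  ext m
  simp only [Finset.mem_biUnion, Finset.mem_image, Finset.mem_range]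
  constructor
  · intro hm
    obtain ⟨h1, h2, h3⟩ := mem_Mf.1 hm
    have hle : Multiset.replicate (m.count d) d ≤ m := Multiset.le_count_iff_replicate_le.1 le_rfl
    have hadd : m - Multiset.replicate (m.count d) d + Multiset.replicate (m.count d) d = m :=
      tsub_add_cancel_of_le hle
    have hsum := congrArg Multiset.sum hadd
    rw [Multiset.sum_add, Multiset.sum_replicate, smul_eq_mul, h3] at hsum
    refine ⟨m.count d, ?_, m - Multiset.replicate (m.count d) d, ?_, hadd⟩
    · rw [Nat.lt_succ_iff, Nat.le_div_iff_mul_le hd]; omega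
    · rw [mem_Mf]
      refine ⟨?_, fun x hx => h2 x (Multiset.mem_of_le tsub_le_self hx), ?_⟩
      · intro x hx
        have hx' := h1 x (Multiset.mem_of_le tsub_le_self hx)
        rcases Finset.mem_insert.1 hx' with rfl | h
        · exfalso
          have := Multiset.count_pos.2 hx
          simp at this
        · exact h
      · rw [mul_comm d]; omega
  · rintro ⟨j, hj, u, hu, rfl⟩
    obtain ⟨h1, h2, h3⟩ := mem_Mf.1 hu
    rw [Nat.lt_succ_iff, Nat.le_div_iff_mul_le hd, mul_comm] at hj
    rw [mem_Mf]
    refine ⟨?_, ?_, ?_⟩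
    · intro x hx
      rcases Multiset.mem_add.1 hx with hx | hx
      · exact Finset.mem_insert_of_mem (h1 x hx)
      · rw [Multiset.eq_of_mem_replicate hx]; exact Finset.mem_insert_self _ _
    · intro x hx
      rcases Multiset.mem_add.1 hx with hx | hx
      · exact h2 x hx
      · rw [Multiset.eq_of_mem_replicate hx]; exact hd
    · rw [Multiset.sum_add, Multiset.sum_replicate, smul_eq_mul, h3, mul_comm j]; omega

lemma pair_rep {a b n : ℕ} (hab : a ≠ b) {m : Multiset ℕ} (hm : m ∈ Mf {a, b} n) :
    m = Multiset.replicate (m.count a) a + Multiset.replicate (m.count b) b ∧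
    a * m.count a + b * m.count b = n := by
  obtain ⟨h1, h2, h3⟩ := mem_Mf.1 hm
  have key : m = Multiset.replicate (m.count a) a + Multiset.replicate (m.count b) b := by
    ext x
    rw [Multiset.count_add, Multiset.count_replicate, Multiset.count_replicate]
    by_cases hxa : a = x
    · subst hxa; simp [hab.symm]
    · by_cases hxb : b = x
      · subst hxb; simp [hab]
      · simp only [hxa, hxb, if_false]
        rw [Multiset.count_eq_zero]
        intro hx
        have := h1 x hx
        simp at this
        omega
  refine ⟨key, ?_⟩
  have := congrArg Multiset.sum key
  rw [h3, Multiset.sum_add, Multiset.sum_replicate, Multiset.sum_replicate] at this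
  simp only [smul_eq_mul] at this
  rw [this]; ring

lemma pair_mem {a b : ℕ} (ha : 0 < a) (hb : 0 < b) (i j : ℕ) :
    Multiset.replicate i a + Multiset.replicate j b ∈ Mf {a, b} (a * i + b * j) := by
  rw [mem_Mf]
  refine ⟨?_, ?_, ?_⟩
  · intro x hx
    rcases Multiset.mem_add.1 hx with hx | hx <;> rw [Multiset.eq_of_mem_replicate hx] <;> simp
  · intro x hx
    rcases Multiset.mem_add.1 hx with hx | hx <;> rw [Multiset.eq_of_mem_replicate hx] <;> assumption
  · simp [mul_comm]

/-- crude upper bound -/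
lemma pair_le (a b : ℕ) (ha : 0 < a) (hb : 0 < b) (hab : a ≠ b) (n : ℕ) :
    cc {a, b} n ≤ n / b + 1 := by
  rw [← Finset.card_range (n / b + 1)]
  apply Finset.card_le_card_of_injOn (fun m => m.count b)
  · intro m hm
    obtain ⟨-, h⟩ := pair_rep hab hm
    simp only [Finset.coe_range, Set.mem_Iio]
    rw [Nat.lt_succ_iff, Nat.le_div_iff_mul_le hb, mul_comm]; omega
  · intro m hm m' hm' he
    obtain ⟨h1, h⟩ := pair_rep hab hm
    obtain ⟨h1', h'⟩ := pair_rep hab hm'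
    simp only at he
    rw [he] at h
    have : m.count a = m'.count a := Nat.eq_of_mul_eq_mul_left ha (by omega)
    rw [h1, h1', this, he]

lemma consec_le (a : ℕ) (ha : 0 < a) (n : ℕ) :
    cc {a, a + 1} n ≤ n / (a * (a + 1)) + 1 := by
  have hab : a ≠ a + 1 := by omega
  rw [← Finset.card_range (n / (a * (a + 1)) + 1)]
  apply Finset.card_le_card_of_injOn (fun m => m.count (a + 1) / a)
  · intro m hm
    obtain ⟨-, h⟩ := pair_rep hab hm
    simp only [Finset.coe_range, Set.mem_Iio]
    rw [Nat.lt_succ_iff, Nat.le_div_iff_mul_le (by positivity)]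
    have := Nat.div_mul_le_self (m.count (a + 1)) a
    nlinarith
  · intro m hm m' hm' he
    obtain ⟨h1, h⟩ := pair_rep hab hm
    obtain ⟨h1', h'⟩ := pair_rep hab hm'
    simp only at he
    have mo : ∀ c d : ℕ, a * c + (a + 1) * d = n → d % a = n % a := by
      rintro c d rfl
      rw [show a * c + (a + 1) * d = d + a * (c + d) by ring, Nat.add_mul_mod_self_left]
    have e : m.count (a + 1) = m'.count (a + 1) := by
      rw [← Nat.div_add_mod (m.count (a + 1)) a, ← Nat.div_add_mod (m'.count (a + 1)) a, he,
        mo _ _ h, mo _ _ h']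
    rw [e] at h
    have : m.count a = m'.count a := Nat.eq_of_mul_eq_mul_left ha (by omega)
    rw [h1, h1', this, e]

lemma consec_ge (a : ℕ) (ha : 0 < a) (n : ℕ) :
    n + 1 ≤ a * (a + 1) * cc {a, a + 1} n + a * a := by
  have hab : a ≠ a + 1 := by omega
  by_cases hn : n + 1 ≤ a * a
  · nlinarith [Nat.zero_le (a * (a + 1) * cc {a, a + 1} n)]
  push Not at hn
  have hq : (n + 1 - a * a) / (a * (a + 1)) + 1 ≤ cc {a, a + 1} n := by
    rw [← Finset.card_range ((n + 1 - a * a) / (a * (a + 1)) + 1)]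
    have hb : ∀ t, t ∈ Finset.range ((n + 1 - a * a) / (a * (a + 1)) + 1) →
        ∃ c, a * c + (a + 1) * (n % a + a * t) = n := by
      intro t ht
      rw [Finset.mem_range, Nat.lt_succ_iff, Nat.le_div_iff_mul_le (by positivity)] at ht
      have hr : n % a < a := Nat.mod_lt _ ha
      have hle : (a + 1) * (n % a + a * t) ≤ n := by
        have : (a + 1) * (n % a + 1) ≤ (a + 1) * a := Nat.mul_le_mul_left _ hr
        have h2 : t * (a * (a + 1)) + a * a ≤ n + 1 := by omega
        nlinarith
      have hdvd : a ∣ n - (a + 1) * (n % a + a * t) := by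
        rw [← Nat.modEq_iff_dvd' hle]
        have : (a + 1) * (n % a + a * t) = n % a + a * (n % a + (a + 1) * t) := by ring
        rw [this, Nat.ModEq, Nat.add_mul_mod_self_left, Nat.mod_mod]
      obtain ⟨c, hc⟩ := hdvd
      exact ⟨c, by omega⟩
    choose! c hc using hb
    apply Finset.card_le_card_of_injOn
      (fun t => Multiset.replicate (c t) a + Multiset.replicate (n % a + a * t) (a + 1))
    · intro t ht
      have := pair_mem ha (Nat.succ_pos a) (c t) (n % a + a * t)
      rw [Nat.succ_eq_add_one, hc t ht] at this
      exact this
    · intro t ht t' ht' he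
      have := congrArg (Multiset.count (a + 1)) he
      simp [Multiset.count_replicate] at this
      omega
  have h3 := Nat.lt_mul_div_succ (n + 1 - a * a) (show 0 < a * (a + 1) by positivity)
  have h4 := Nat.mul_le_mul_left (a * (a + 1)) hq
  omega

lemma peel (H : Finset ℕ) (T j : ℕ) (hT : 0 < T) (hj : T ^ 3 ≤ j) :
    cc H j ≤ 2 * ∑ v ∈ Finset.range (j - T + 1), cc H v := by
  classical
  have hTj : T ≤ j := le_trans (Nat.le_self_pow (by norm_num) T) hj
  set U1 := (Finset.range (j - T + 1)).biUnion
    (fun v => (Mf H v).image (fun u => u + {j - v})) with hU1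
  set U2 := (Finset.range (j - T + 1)).biUnion
    (fun v => (Mf H v).image (fun u => u + Multiset.replicate T ((j - v) / T))) with hU2
  have c1 : U1.card ≤ ∑ v ∈ Finset.range (j - T + 1), cc H v :=
    Finset.card_biUnion_le.trans (Finset.sum_le_sum fun v _ => Finset.card_image_le)
  have c2 : U2.card ≤ ∑ v ∈ Finset.range (j - T + 1), cc H v :=
    Finset.card_biUnion_le.trans (Finset.sum_le_sum fun v _ => Finset.card_image_le)
  have hsub : Mf H j ⊆ U1 ∪ U2 := by
    intro m hm
    obtain ⟨h1, h2, h3⟩ := mem_Mf.1 hm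
    rw [Finset.mem_union]
    by_cases hbig : ∃ r ∈ m, T ≤ r
    · left
      obtain ⟨r, hr, hTr⟩ := hbig
      obtain ⟨u, rfl⟩ := Multiset.exists_cons_of_mem hr
      rw [Multiset.sum_cons] at h3
      simp only [hU1, Finset.mem_biUnion, Finset.mem_image, Finset.mem_range]
      refine ⟨u.sum, by omega, u, mem_Mf.2 ⟨fun x hx => h1 x (Multiset.mem_cons_of_mem hx),
        fun x hx => h2 x (Multiset.mem_cons_of_mem hx), rfl⟩, ?_⟩
      rw [show j - u.sum = r by omega, add_comm, Multiset.singleton_add]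
    · right
      push Not at hbig
      have : ∃ i ∈ m, T ≤ m.count i := by
        by_contra hcon
        push Not at hcon
        have hs : m.sum = ∑ i ∈ m.toFinset, m.count i * i := by
          rw [Finset.sum_multiset_count]; simp
        have hle : ∑ i ∈ m.toFinset, m.count i * i ≤ m.toFinset.card • ((T - 1) * T) := by
          apply Finset.sum_le_card_nsmul
          intro i hi
          rw [Multiset.mem_toFinset] at hi
          have := hcon i hi
          have := hbig i hi
          exact Nat.mul_le_mul (by omega) (by omega)
        have hcard : m.toFinset.card ≤ T := by
          rw [← Finset.card_range T]
          apply Finset.card_le_card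
          intro i hi
          rw [Multiset.mem_toFinset] at hi
          exact Finset.mem_range.2 (hbig i hi)
        rw [smul_eq_mul] at hle
        have : m.toFinset.card * ((T - 1) * T) ≤ T * ((T - 1) * T) := Nat.mul_le_mul_right _ hcard
        obtain ⟨t, rfl⟩ : ∃ t, T = t + 1 := ⟨T - 1, by omega⟩
        simp only [Nat.add_sub_cancel] at *
        nlinarith
      obtain ⟨i, hi, hc⟩ := this
      have hle : Multiset.replicate T i ≤ m := Multiset.le_count_iff_replicate_le.1 hc
      have hadd : m - Multiset.replicate T i + Multiset.replicate T i = m :=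
        tsub_add_cancel_of_le hle
      have hsum := congrArg Multiset.sum hadd
      rw [Multiset.sum_add, Multiset.sum_replicate, smul_eq_mul, h3] at hsum
      have hipos := h2 i hi
      have : T * 1 ≤ T * i := Nat.mul_le_mul_left _ hipos
      simp only [hU2, Finset.mem_biUnion, Finset.mem_image, Finset.mem_range]
      refine ⟨(m - Multiset.replicate T i).sum, by omega, m - Multiset.replicate T i,
        mem_Mf.2 ⟨fun x hx => h1 x (Multiset.mem_of_le tsub_le_self hx),
          fun x hx => h2 x (Multiset.mem_of_le tsub_le_self hx), rfl⟩, ?_⟩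
      rw [show j - (m - Multiset.replicate T i).sum = T * i by omega, Nat.mul_div_cancel_left _ hT,
        hadd]
  calc cc H j ≤ (U1 ∪ U2).card := Finset.card_le_card hsub
    _ ≤ U1.card + U2.card := Finset.card_union_le _ _
    _ ≤ _ := by omega

lemma main_conv (H : Finset ℕ) (V : ℕ → ℤ) (R B N : ℕ) (hR : 0 < R)
    (hV : ∀ n : ℕ, (n : ℤ) ≤ R * V n + B)
    (hN : (2 * B ^ 2 * R + B + 1) ^ 3 + B ≤ N) :
    0 ≤ ∑ n ∈ Finset.range (N + 1), V n * (cc H (N - n) : ℤ) := by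
  obtain ⟨T, hT⟩ : ∃ T, T = 2 * B ^ 2 * R + B + 1 := ⟨_, rfl⟩
  rw [← hT] at hN
  have hTN : T ≤ N := by
    have := Nat.le_self_pow (show 3 ≠ 0 by norm_num) T
    omega
  obtain ⟨S, hS⟩ : ∃ S, S = ∑ v ∈ Finset.range (N - T + 1), cc H v := ⟨_, rfl⟩
  have hRz : (0 : ℤ) < R := by exact_mod_cast hR
  have hv : ∀ n : ℕ, (if n < B then -(B : ℤ) else 0) + (if T ≤ n then 2 * (B : ℤ) ^ 2 else 0) ≤ V n := by
    intro n
    have h := hV n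
    by_cases h1 : n < B
    · rw [if_pos h1, if_neg (by rw [hT]; have := Nat.zero_le (2 * B ^ 2 * R); omega)]
      by_contra hc
      push Not at hc
      have : V n ≤ -B - 1 := by omega
      have h2 : (R : ℤ) * V n ≤ R * (-B - 1) := mul_le_mul_of_nonneg_left this hRz.le
      nlinarith
    · rw [if_neg h1]
      push Not at h1
      by_cases h2 : T ≤ n
      · rw [if_pos h2]
        have h3 : (T : ℤ) ≤ n := by exact_mod_cast h2
        rw [hT] at h3
        push_cast at h3
        by_contra hc
        push Not at hc
        nlinarith
      · rw [if_neg h2]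
        have h3 : (B : ℤ) ≤ n := by exact_mod_cast h1
        by_contra hc
        push Not at hc
        nlinarith
  have hstep : ∑ n ∈ Finset.range (N + 1), ((if n < B then -(B : ℤ) else 0) +
      (if T ≤ n then 2 * (B : ℤ) ^ 2 else 0)) * (cc H (N - n) : ℤ) ≤
      ∑ n ∈ Finset.range (N + 1), V n * (cc H (N - n) : ℤ) :=
    Finset.sum_le_sum fun n _ => mul_le_mul_of_nonneg_right (hv n) (by positivity)
  refine le_trans ?_ hstep
  simp only [add_mul, Finset.sum_add_distrib, ite_mul, zero_mul]
  rw [← Finset.sum_filter, ← Finset.sum_filter]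
  have f1 : (Finset.range (N + 1)).filter (· < B) = Finset.range B := by
    ext n; simp only [Finset.mem_filter, Finset.mem_range]; omega
  have e2 : ∑ n ∈ (Finset.range (N + 1)).filter (T ≤ ·), 2 * (B : ℤ) ^ 2 * (cc H (N - n) : ℤ)
      = 2 * (B : ℤ) ^ 2 * S := by
    rw [← Finset.mul_sum, hS]
    push_cast
    refine congrArg (fun z : ℤ => 2 * (B : ℤ) ^ 2 * z) ?_
    apply Finset.sum_nbij' (fun n => N - n) (fun n => N - n)
    · intro n hn; simp only [Finset.mem_filter, Finset.mem_range] at hn ⊢; omega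
    · intro n hn; simp only [Finset.mem_filter, Finset.mem_range] at hn ⊢; omega
    · intro n hn; simp only [Finset.mem_filter, Finset.mem_range] at hn ⊢; omega
    · intro n hn; simp only [Finset.mem_range] at hn ⊢; omega
    · intro n hn; rfl
  have e1 : -(B : ℤ) * (B * (2 * S)) ≤ ∑ n ∈ Finset.range B, -(B : ℤ) * (cc H (N - n) : ℤ) := by
    rw [← Finset.mul_sum]
    apply mul_le_mul_of_nonpos_left _ (by simp)
    have : ∑ n ∈ Finset.range B, (cc H (N - n) : ℤ) ≤ (Finset.range B).card • (2 * (S : ℤ)) := by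
      apply Finset.sum_le_card_nsmul
      intro n hn
      rw [Finset.mem_range] at hn
      have h := peel H T (N - n) (by omega) (by omega)
      have : ∑ v ∈ Finset.range (N - n - T + 1), cc H v ≤ S := by
        rw [hS]
        apply Finset.sum_le_sum_of_subset
        intro v hv
        simp only [Finset.mem_range] at hv ⊢
        have := Nat.le_self_pow (show 3 ≠ 0 by norm_num) T
        omega
      exact_mod_cast h.trans (by omega)
    simpa using this
  rw [f1, e2]
  nlinarith

/-- the local difference function -/
noncomputable def VV (W : Finset ℕ) (s k : ℕ) (n : ℕ) : ℤ :=
  (if s ≤ n then (cc (insert s W) (n - s) : ℤ) else 0) - cc (insert k W) n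

lemma case_one (s k : ℕ) (hs : 0 < s) (hk : 2 * s * (s + 1) ≤ k) (n : ℕ) :
    (n : ℤ) ≤ ((2 * s * (s + 1) : ℕ) : ℤ) * VV {s + 1} s k n + ((4 * s * (s + 1) : ℕ) : ℤ) := by
  have hks : s + 1 ≠ k := by nlinarith
  have hk0 : 0 < k := lt_of_lt_of_le (by positivity) hk
  have hg : cc {k, s + 1} n ≤ n / k + 1 := by
    rw [Finset.pair_comm]
    exact pair_le (s + 1) k (by omega) hk0 hks n
  have hg2 : n / k * (2 * s * (s + 1)) ≤ n :=
    (Nat.mul_le_mul_left _ hk).trans (Nat.div_mul_le_self n k)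
  have hg3 : 2 * s * (s + 1) * cc {k, s + 1} n ≤ n + 2 * s * (s + 1) := by
    have := Nat.mul_le_mul_left (2 * s * (s + 1)) hg
    nlinarith
  have hf : ((n : ℤ) - s * (s + 1)) ≤
      s * (s + 1) * (if s ≤ n then (cc {s, s + 1} (n - s) : ℤ) else 0) := by
    split_ifs with h
    · have := consec_ge s hs (n - s)
      zify [h] at this
      linarith
    · push Not at h
      zify at h
      nlinarith
  zify at hg3
  unfold VV
  push_cast
  nlinarith

lemma sum_lin (c : ℤ) (d : ℤ) (D : ℕ) :
    2 * ∑ j ∈ Finset.range (D + 1), (c - d * j) = (D + 1) * (2 * c - d * D) := by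
  induction D with
  | zero => simp
  | succ D ih => rw [Finset.sum_range_succ, mul_add, ih]; push_cast; ring

lemma F_lower (s k m : ℕ) (hs : 0 < s) (hk : s + 2 ≤ k) :
    (m : ℤ) ^ 2 - 2 * s ^ 2 * (m + k + 1) ≤
      2 * s * (s + 1) * (k + 1) * cc (insert s {s + 1, k + 1}) m := by
  have e : (insert s {s + 1, k + 1} : Finset ℕ) = insert (k + 1) {s, s + 1} := by
    ext x; simp; omega
  rw [e, cc_insert (k + 1) (by omega) _ (by simp; omega)]
  obtain ⟨D, hD⟩ : ∃ D, D = m / (k + 1) := ⟨_, rfl⟩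
  rw [← hD]
  have h1 : (k + 1) * D ≤ m := by rw [hD]; exact Nat.mul_div_le _ _
  have h2 : m < (k + 1) * (D + 1) := by rw [hD]; exact Nat.lt_mul_div_succ _ (by omega)
  have hsum : ∑ j ∈ Finset.range (D + 1), (((m : ℤ) - s ^ 2 + 1) - ((k : ℤ) + 1) * j) ≤
      ∑ j ∈ Finset.range (D + 1), (s : ℤ) * (s + 1) * (cc {s, s + 1} (m - (k + 1) * j) : ℤ) := by
    apply Finset.sum_le_sum
    intro j hj
    rw [Finset.mem_range] at hj
    have hle : (k + 1) * j ≤ m := (Nat.mul_le_mul_left _ (by omega)).trans h1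
    have := consec_ge s hs (m - (k + 1) * j)
    zify [hle] at this
    linarith
  rw [← Finset.mul_sum] at hsum
  have hl := sum_lin ((m : ℤ) - s ^ 2 + 1) ((k : ℤ) + 1) D
  push_cast
  set F : ℤ := ∑ j ∈ Finset.range (D + 1), (cc {s, s + 1} (m - (k + 1) * j) : ℤ)
  zify at h1 h2
  have h3 : ((D : ℤ) + 1) * (m - 2 * s ^ 2) ≤ 2 * (s * (s + 1) * F) := by
    have : ((D : ℤ) + 1) * (m - 2 * s ^ 2) ≤
        (D + 1) * (2 * ((m : ℤ) - s ^ 2 + 1) - ((k : ℤ) + 1) * D) :=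
      mul_le_mul_of_nonneg_left (by linarith) (by positivity)
    linarith
  have h4 := mul_le_mul_of_nonneg_left h3 (show (0 : ℤ) ≤ k + 1 by positivity)
  have h5 : ((k : ℤ) + 1) * (D + 1) ≤ m + k + 1 := by linarith
  have h6 := mul_le_mul_of_nonneg_left h5 (show (0 : ℤ) ≤ 2 * s ^ 2 by positivity)
  have h7 := mul_le_mul_of_nonneg_left h2.le (show (0 : ℤ) ≤ m by positivity)
  nlinarith

lemma G_upper (s k n : ℕ) (hs : 0 < s) (hk : s + 2 ≤ k) :
    2 * ((s : ℤ) + 1) * k * (k + 1) * cc (insert k {s + 1, k + 1}) n ≤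
      (n + s + 1) * (n + s + 2 * k * (k + 1)) := by
  have e : (insert k {s + 1, k + 1} : Finset ℕ) = insert (s + 1) {k, k + 1} := by
    ext x; simp; omega
  rw [e, cc_insert (s + 1) (by omega) _ (by simp; omega)]
  obtain ⟨D, hD⟩ : ∃ D, D = n / (s + 1) := ⟨_, rfl⟩
  rw [← hD]
  have h1 : (s + 1) * D ≤ n := by rw [hD]; exact Nat.mul_div_le _ _
  have h2 : n < (s + 1) * (D + 1) := by rw [hD]; exact Nat.lt_mul_div_succ _ (by omega)
  have hsum : ∑ j ∈ Finset.range (D + 1), (k : ℤ) * (k + 1) * (cc {k, k + 1} (n - (s + 1) * j) : ℤ)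
      ≤ ∑ j ∈ Finset.range (D + 1), (((n : ℤ) + k * (k + 1)) - ((s : ℤ) + 1) * j) := by
    apply Finset.sum_le_sum
    intro j hj
    rw [Finset.mem_range] at hj
    have hle : (s + 1) * j ≤ n := (Nat.mul_le_mul_left _ (by omega)).trans h1
    have h := Nat.mul_le_mul_left (k * (k + 1)) (consec_le k (by omega) (n - (s + 1) * j))
    have h' := Nat.mul_div_le (n - (s + 1) * j) (k * (k + 1))
    rw [mul_add (k * (k + 1)), mul_one] at h
    have h'' : k * (k + 1) * cc {k, k + 1} (n - (s + 1) * j) ≤ n - (s + 1) * j + k * (k + 1) := by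
      omega
    zify [hle] at h''
    linarith
  rw [← Finset.mul_sum] at hsum
  have hl := sum_lin ((n : ℤ) + k * (k + 1)) ((s : ℤ) + 1) D
  push_cast
  set F : ℤ := ∑ j ∈ Finset.range (D + 1), (cc {k, k + 1} (n - (s + 1) * j) : ℤ)
  zify at h1 h2
  have h3 : 2 * ((k : ℤ) * (k + 1) * F) ≤ ((D : ℤ) + 1) * (n + s + 2 * k * (k + 1)) := by
    have : (D + 1) * (2 * ((n : ℤ) + k * (k + 1)) - ((s : ℤ) + 1) * D) ≤
        ((D : ℤ) + 1) * (n + s + 2 * k * (k + 1)) :=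
      mul_le_mul_of_nonneg_left (by linarith) (by positivity)
    linarith
  have h4 := mul_le_mul_of_nonneg_left h3 (show (0 : ℤ) ≤ s + 1 by positivity)
  have h5 : ((s : ℤ) + 1) * (D + 1) ≤ n + s + 1 := by linarith
  have h6 := mul_le_mul_of_nonneg_right h5
    (show (0 : ℤ) ≤ n + s + 2 * k * (k + 1) by positivity)
  nlinarith

def c1 (s k : ℕ) : ℕ := 2 * k * s ^ 2 + s * (4 * s + 1 + 2 * k * (k + 1))
def c0 (s k : ℕ) : ℕ := 2 * k * s ^ 2 * (k + 1) + s * (2 * s + 1) * (2 * s + 2 * k * (k + 1))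

lemma case_two (s k : ℕ) (hs : 0 < s) (hk : s + 2 ≤ k) (n : ℕ) :
    (n : ℤ) ≤ ((2 * s * (s + 1) * k * (k + 1) : ℕ) : ℤ) * VV {s + 1, k + 1} s k n +
      (((c1 s k + 1) ^ 2 + c0 s k + s : ℕ) : ℤ) := by
  have hG := G_upper s k n hs hk
  have hG' := mul_le_mul_of_nonneg_left hG (show (0 : ℤ) ≤ s by positivity)
  unfold VV
  split_ifs with h
  · obtain ⟨m, rfl⟩ := Nat.exists_eq_add_of_le h
    rw [Nat.add_sub_cancel_left]
    have hF := F_lower s k m hs hk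
    have hF' := mul_le_mul_of_nonneg_left hF (show (0 : ℤ) ≤ k by positivity)
    set F : ℤ := (cc (insert s {s + 1, k + 1}) m : ℤ)
    set G : ℤ := (cc (insert k {s + 1, k + 1}) (s + m) : ℤ)
    have hkz : (s : ℤ) + 2 ≤ k := by exact_mod_cast hk
    have hm2 : (m : ℤ) ^ 2 ≤ (k - s) * (m : ℤ) ^ 2 := by nlinarith [sq_nonneg (m : ℤ)]
    have key : (m : ℤ) ^ 2 - c1 s k * m - c0 s k ≤
        2 * s * (s + 1) * k * (k + 1) * (F - G) := by
      unfold c1 c0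
      push_cast at hG' ⊢
      nlinarith
    push_cast
    have : (0 : ℤ) ≤ m ^ 2 - (c1 s k + 1) * m + (c1 s k + 1) ^ 2 := by
      nlinarith [sq_nonneg ((m : ℤ) - (c1 s k + 1)), sq_nonneg (m : ℤ), sq_nonneg ((c1 s k : ℤ) + 1)]
    linarith
  · push Not at h
    set G : ℤ := (cc (insert k {s + 1, k + 1}) n : ℤ)
    have hn : (n : ℤ) ≤ s := by exact_mod_cast h.le
    have hb : (s : ℤ) * ((n + s + 1) * (n + s + 2 * k * (k + 1))) ≤
        s * ((2 * s + 1) * (2 * s + 2 * k * (k + 1))) := by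
      apply mul_le_mul_of_nonneg_left _ (by positivity)
      apply mul_le_mul <;> first | linarith | positivity
    have hc : (s : ℤ) * ((2 * s + 1) * (2 * s + 2 * k * (k + 1))) ≤ c0 s k := by
      unfold c0
      push_cast
      have : (0 : ℤ) ≤ 2 * k * s ^ 2 * (k + 1) := by positivity
      linarith
    push_cast
    have : (0 : ℤ) ≤ ((c1 s k : ℤ) + 1) ^ 2 := by positivity
    linarith

lemma case_glue (W H : Finset ℕ) (s k N R B : ℕ) (hsN : s ≤ N) (hR : 0 < R)
    (h1 : Disjoint (insert s W) H) (h2 : Disjoint (insert k W) H)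
    (hV : ∀ n : ℕ, (n : ℤ) ≤ R * VV W s k n + B)
    (hN : (2 * B ^ 2 * R + B + 1) ^ 3 + B ≤ N) :
    cc (insert k W ∪ H) N ≤ cc (insert s W ∪ H) (N - s) := by
  have h := main_conv H (VV W s k) R B N hR hV hN
  rw [cc_union _ _ h1, cc_union _ _ h2]
  simp only [VV, sub_mul, Finset.sum_sub_distrib, ite_mul, zero_mul] at h
  rw [← Finset.sum_filter] at h
  have e : ∑ n ∈ (Finset.range (N + 1)).filter (s ≤ ·),
      (cc (insert s W) (n - s) : ℤ) * (cc H (N - n) : ℤ) =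
      ∑ j ∈ Finset.range (N - s + 1), (cc (insert s W) j : ℤ) * (cc H (N - s - j) : ℤ) := by
    apply Finset.sum_nbij' (fun n => n - s) (fun n => n + s)
    · intro n hn; simp only [Finset.mem_filter, Finset.mem_range] at hn ⊢; omega
    · intro n hn; simp only [Finset.mem_filter, Finset.mem_range] at hn ⊢; omega
    · intro n hn; simp only [Finset.mem_filter, Finset.mem_range] at hn ⊢; omega
    · intro n hn; simp only [Finset.mem_range] at hn ⊢; omega
    · intro n hn
      simp only [Finset.mem_filter, Finset.mem_range] at hn
      rw [show N - s - (n - s) = N - n by omega]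
  rw [e] at h
  zify
  linarith

lemma pow_bound (y R B : ℕ) (hy : 8 ≤ y) (hR : R ≤ y ^ 5) (hB : B ≤ y ^ 13) :
    (2 * B ^ 2 * R + B + 1) ^ 3 + B ≤ y ^ 100 := by
  have h1 : ∀ a : ℕ, 1 ≤ y ^ a := fun a => Nat.one_le_pow _ _ (by omega)
  have hT : 2 * B ^ 2 * R + B + 1 ≤ y ^ 32 := by
    calc 2 * B ^ 2 * R + B + 1 ≤ 2 * (y ^ 13) ^ 2 * y ^ 5 + y ^ 13 + 1 := by gcongr
      _ ≤ 2 * y ^ 31 + y ^ 31 + y ^ 31 := by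
        have : y ^ 13 ≤ y ^ 31 := Nat.pow_le_pow_right (by omega) (by norm_num)
        have := h1 31
        have : 2 * (y ^ 13) ^ 2 * y ^ 5 = 2 * y ^ 31 := by ring
        omega
      _ ≤ y ^ 31 * y := by nlinarith [h1 31]
      _ = y ^ 32 := by ring
  calc (2 * B ^ 2 * R + B + 1) ^ 3 + B ≤ (y ^ 32) ^ 3 + y ^ 13 := by gcongr
    _ ≤ y ^ 96 + y ^ 96 := by
        have : y ^ 13 ≤ y ^ 96 := Nat.pow_le_pow_right (by omega) (by norm_num)
        have : (y ^ 32) ^ 3 = y ^ 96 := by ring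
        omega
    _ ≤ y ^ 96 * y := by nlinarith [h1 96]
    _ = y ^ 97 := by ring
    _ ≤ y ^ 100 := Nat.pow_le_pow_right (by omega) (by norm_num)

lemma Gamma_big (s : ℕ) (hs : 0 < s) : ((s + 1) ^ 3) ^ 100 ≤ GammaS s := by
  unfold GammaS gammaLS
  set P := prodP (3 * s + 2) s with hP
  have h5 : ∏ i ∈ Finset.range 5, (s + 1 + i) ≤ P := by
    rw [hP, prodP]
    apply Finset.prod_le_prod_of_subset_of_one_le'
    · intro x hx; simp only [Finset.mem_range] at *; omega
    · intros; omega
  have h6 : (s + 1) * 100 ≤ P := by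
    refine le_trans ?_ h5
    simp only [Finset.prod_range_succ, Finset.prod_range_zero]
    have : 100 ≤ (s + 1 + 1) * (s + 1 + 2) * (s + 1 + 3) * (s + 1 + 4) := by
      calc 100 ≤ 2 * 3 * 4 * 5 := by norm_num
        _ ≤ _ := by gcongr <;> omega
    calc (s + 1) * 100 ≤ (s + 1) * ((s + 1 + 1) * (s + 1 + 2) * (s + 1 + 3) * (s + 1 + 4)) := by
          gcongr
      _ = _ := by ring
  have hsum : 1 ≤ ∑ i ∈ Finset.range (3 * s + 2), (s + 1 + i) := by
    rw [Finset.sum_range_succ]; omega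
  have hexp : 300 ≤ (P ^ 2 - 1) * (3 * s + 2) + 2 := by
    have : 400 ≤ P ^ 2 := by nlinarith
    have : 399 * 1 ≤ (P ^ 2 - 1) * (3 * s + 2) := Nat.mul_le_mul (by omega) (by omega)
    omega
  calc ((s + 1) ^ 3) ^ 100 = (s + 1) ^ 300 := by rw [← pow_mul]
    _ ≤ P ^ 300 := Nat.pow_le_pow_left (by omega) _
    _ ≤ P ^ ((P ^ 2 - 1) * (3 * s + 2) + 2) := Nat.pow_le_pow_right (by omega) hexp
    _ ≤ P ^ ((P ^ 2 - 1) * (3 * s + 2) + 2) + ((P ^ 2 - 1) * (3 * s + 2) - 2) * P :=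
      Nat.le_add_right _ _
    _ ≤ _ := Nat.le_mul_of_pos_left _ hsum

lemma key_ineq (L s : ℕ) (hs : 0 < s) (hL : 3 ≤ L) (N : ℕ) (hN : GammaS s ≤ N) :
    cc (Finset.Icc (s + 1) (L + s)) N ≤
      cc ((Finset.Icc s (L + s)).erase (L + s - 1)) (N - s) := by
  obtain ⟨k, hk⟩ : ∃ k, k = L + s - 1 := ⟨_, rfl⟩
  have hk2 : s + 2 ≤ k := by omega
  have hLs : L + s = k + 1 := by omega
  rw [hLs, Nat.add_sub_cancel]
  have hNb := (Gamma_big s hs).trans hN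
  obtain ⟨y, hy⟩ : ∃ y, y = (s + 1) ^ 3 := ⟨_, rfl⟩
  rw [← hy] at hNb
  have hy8 : 8 ≤ y := by
    rw [hy]; calc 8 = 2 ^ 3 := by norm_num
      _ ≤ _ := Nat.pow_le_pow_left (by omega) _
  have hysq : 2 * (s + 1) ^ 2 ≤ y := by rw [hy, pow_succ (s + 1) 2]; nlinarith [sq_nonneg (s + 1)]
  have hsy : s + 1 ≤ y := by rw [hy]; exact Nat.le_self_pow (by norm_num) _
  have hsN : s ≤ N := by
    have := Nat.le_self_pow (show 100 ≠ 0 by norm_num) y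
    omega
  by_cases hc : 2 * s * (s + 1) ≤ k
  · have e1 : Finset.Icc (s + 1) (k + 1) = insert k {s + 1} ∪ (Finset.Icc (s + 2) (k + 1)).erase k := by
      ext x; simp; omega
    have e2 : (Finset.Icc s (k + 1)).erase k = insert s {s + 1} ∪ (Finset.Icc (s + 2) (k + 1)).erase k := by
      ext x; simp; omega
    rw [e1, e2]
    apply case_glue {s + 1} _ s k N (2 * s * (s + 1)) (4 * s * (s + 1)) hsN (by positivity)
    · rw [Finset.disjoint_left]; intro x; simp; omega
    · rw [Finset.disjoint_left]; intro x; simp; omega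
    · exact case_one s k hs hc
    · refine (pow_bound y _ _ hy8 ?_ ?_).trans hNb
      · calc 2 * s * (s + 1) ≤ y := by nlinarith
          _ ≤ y ^ 5 := Nat.le_self_pow (by norm_num) _
      · calc 4 * s * (s + 1) ≤ y ^ 2 := by nlinarith
          _ ≤ y ^ 13 := Nat.pow_le_pow_right (by omega) (by norm_num)
  · push Not at hc
    have e1 : Finset.Icc (s + 1) (k + 1) = insert k {s + 1, k + 1} ∪ Finset.Icc (s + 2) (k - 1) := by
      ext x; simp; omega
    have e2 : (Finset.Icc s (k + 1)).erase k = insert s {s + 1, k + 1} ∪ Finset.Icc (s + 2) (k - 1) := by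
      ext x; simp; omega
    rw [e1, e2]
    apply case_glue {s + 1, k + 1} _ s k N (2 * s * (s + 1) * k * (k + 1))
      ((c1 s k + 1) ^ 2 + c0 s k + s) hsN (by have : 0 < k := by omega
                                              positivity)
    · rw [Finset.disjoint_left]; intro x; simp; omega
    · rw [Finset.disjoint_left]; intro x; simp; omega
    · exact case_two s k hs hk2
    · have hk1 : k + 1 ≤ y := by nlinarith
      have hky : k ≤ y := by omega
      have hsy' : s ≤ y := by omega
      have h1 : ∀ a : ℕ, 1 ≤ y ^ a := fun a => Nat.one_le_pow _ _ (by omega)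
      refine (pow_bound y _ _ hy8 ?_ ?_).trans hNb
      · calc 2 * s * (s + 1) * k * (k + 1) ≤ y * y * y * y * y := by
              gcongr
              nlinarith
          _ = y ^ 5 := by ring
      · have b1 : c1 s k + 1 ≤ y ^ 5 := by
          unfold c1
          calc _ ≤ 2 * y * y ^ 2 + y * (4 * y + 1 + 2 * y * y) + 1 := by gcongr
            _ ≤ y * y * y * y * y := by
              have a : y * y * (8 * 8) ≤ y * y * (y * y) := by gcongr
              have := Nat.mul_le_mul_right y a
              nlinarith
            _ = y ^ 5 := by ring
        have b0 : c0 s k ≤ y ^ 6 := by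
          unfold c0
          calc _ ≤ 2 * y * y ^ 2 * y + y * (2 * y + 1) * (2 * y + 2 * y * y) := by gcongr
            _ ≤ y * y * y * y * (8 * 8) := by
              have h : 2 * y + 1 ≤ 3 * y := by omega
              have h' : 2 * y + 2 * y * y ≤ 4 * y * y := by nlinarith
              have := Nat.mul_le_mul (Nat.mul_le_mul_left y h) h'
              nlinarith [Nat.zero_le (y * y * y * y)]
            _ ≤ y * y * y * y * (y * y) := by gcongr
            _ = y ^ 6 := by ring
        calc (c1 s k + 1) ^ 2 + c0 s k + s ≤ (y ^ 5) ^ 2 + y ^ 6 + y := by gcongr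
          _ ≤ y ^ 12 + y ^ 12 + y ^ 12 := by
            have a1 : (y ^ 5) ^ 2 ≤ y ^ 12 := by
              rw [← pow_mul]; exact Nat.pow_le_pow_right (by omega) (by norm_num)
            have a2 : y ^ 6 ≤ y ^ 12 := Nat.pow_le_pow_right (by omega) (by norm_num)
            have a3 : y ≤ y ^ 12 := Nat.le_self_pow (by norm_num) _
            omega
          _ ≤ y ^ 12 * y := by nlinarith [h1 12]
          _ = y ^ 13 := by ring

theorem stmt_7 (L s : ℕ) (hs : 0 < s) (hL : 3 ≤ L)
    (N : ℕ) (hN : GammaS s ≤ N) :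
    Nat.card {p : N.Partition // InC L s p} ≥ Nat.card {p : N.Partition // InD L s p} := by
  classical
  have hsN : s ≤ N := by
    have h1 := (Gamma_big s hs).trans hN
    have h2 := Nat.le_self_pow (show 100 ≠ 0 by norm_num) ((s + 1) ^ 3)
    have h3 := Nat.le_self_pow (show 3 ≠ 0 by norm_num) (s + 1)
    omega
  have hD : Nat.card {p : N.Partition // InD L s p} ≤ cc (Finset.Icc (s + 1) (L + s)) N := by
    have e : cc (Finset.Icc (s + 1) (L + s)) N =
        Nat.card {m // m ∈ Mf (Finset.Icc (s + 1) (L + s)) N} := by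
      rw [Nat.card_eq_fintype_card, Fintype.card_coe, cc]
    rw [e]
    apply Nat.card_le_card_of_injective
      (fun p : {p : N.Partition // InD L s p} =>
        (⟨p.1.parts, mem_Mf.2 ⟨fun x hx => Finset.mem_Icc.2 (p.2.2 x hx),
          fun x hx => p.1.parts_pos hx, p.1.parts_sum⟩⟩ :
          {m // m ∈ Mf (Finset.Icc (s + 1) (L + s)) N}))
    intro p q h
    simp only [Subtype.mk.injEq] at h
    exact Subtype.ext (Nat.Partition.ext h)
  have hC : cc ((Finset.Icc s (L + s)).erase (L + s - 1)) (N - s) ≤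
      Nat.card {p : N.Partition // InC L s p} := by
    have e : cc ((Finset.Icc s (L + s)).erase (L + s - 1)) (N - s) =
        Nat.card {m // m ∈ Mf ((Finset.Icc s (L + s)).erase (L + s - 1)) (N - s)} := by
      rw [Nat.card_eq_fintype_card, Fintype.card_coe, cc]
    rw [e]
    have hex : ∀ m : {m // m ∈ Mf ((Finset.Icc s (L + s)).erase (L + s - 1)) (N - s)},
        ∃ p : {p : N.Partition // InC L s p}, p.1.parts = s ::ₘ m.1 := by
      rintro ⟨m, hm⟩
      obtain ⟨h1, h2, h3⟩ := mem_Mf.1 hm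
      refine ⟨⟨⟨s ::ₘ m, ?_, ?_⟩, ?_, ?_, ?_⟩, rfl⟩
      · intro i hi
        rcases Multiset.mem_cons.1 hi with rfl | hi
        · exact hs
        · exact h2 i hi
      · rw [Multiset.sum_cons, h3]; omega
      · exact Multiset.mem_cons_self _ _
      · intro x hx
        rcases Multiset.mem_cons.1 hx with rfl | hx
        · omega
        · exact Finset.mem_Icc.1 (Finset.mem_of_mem_erase (h1 x hx))
      · intro hx
        rcases Multiset.mem_cons.1 hx with hx | hx
        · omega
        · exact Finset.ne_of_mem_erase (h1 _ hx) rfl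
    choose f hf using hex
    apply Nat.card_le_card_of_injective f
    intro a b hab
    have : s ::ₘ a.1 = s ::ₘ b.1 := by rw [← hf a, ← hf b, hab]
    exact Subtype.ext ((Multiset.cons_inj_right s).1 this)
  exact hD.trans ((key_ineq L s hs hL N hN).trans hC)
end
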